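/- G is a strong Riemannian metric on 𝓜: for every γ ∈ 𝓜, G_γ is a symmetric bilinear form on H^s(𝕋,ℝⁿ) and there exist constants 0 < c ≤ C < ∞ (depending on γ) such that c·‖u‖²_{H^s} ≤ G_γ(u,u) ≤ C·‖u‖²_{H^s} for all u ∈ H^s(𝕋,ℝⁿ). Consequently the Riesz map J_γ : H^s(𝕋,ℝⁿ) → H^s(𝕋,ℝⁿ)', defined by (J_γ u)(v) = G_γ(u,v), is an isomorphism of Banach spaces. -/

import Mathlib

open MeasureTheory Real Filter Set
open scoped ENNReal Topology RealInnerProductSpace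

noncomputable section

/-- Euclidean space `ℝⁿ`. -/
abbrev En (n : ℕ) : Type := EuclideanSpace ℝ (Fin n)

/-- A fundamental domain for the circle `𝕋 = ℝ/ℤ`. -/
def I01 : Set ℝ := Set.Ico (0 : ℝ) 1

/-- The intrinsic distance on `𝕋 = ℝ/ℤ`, expressed for real representatives. -/
def dT (x y : ℝ) : ℝ := ⨅ k : ℤ, |x - y - (k : ℝ)|

/-- Supremum norm of a (periodic) function on the circle. -/
def supNorm {E : Type*} [NormedAddCommGroup E] (f : ℝ → E) : ℝ := ⨆ x : ℝ, ‖f x‖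

/-- The squared Gagliardo seminorm `[v]_{H^σ}²` of a function on the circle, valued in `[0,∞]`. -/
def gagliardoSqE {E : Type*} [NormedAddCommGroup E] (σ : ℝ) (v : ℝ → E) : ℝ≥0∞ :=
  ∫⁻ x in I01, ∫⁻ y in I01, ENNReal.ofReal (‖v y - v x‖ ^ 2 / dT x y ^ (2 * σ + 1))

/-- Membership in the Sobolev–Slobodeckij space `H^s(𝕋, ℝⁿ)`; for `s ∈ (3/2,2)` such
functions have a `C¹` representative, which we take as the defining data. -/
def InHs {n : ℕ} (s : ℝ) (u : ℝ → En n) : Prop :=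
  Function.Periodic u 1 ∧ ContDiff ℝ 1 u ∧ gagliardoSqE (s - 1) (deriv u) < ⊤

/-- The squared `H^s` norm `‖u‖²_{L²} + ‖u'‖²_{L²} + [u']²_{H^{s-1}}`. -/
def HsNormSq {n : ℕ} (s : ℝ) (u : ℝ → En n) : ℝ :=
  (∫ x in I01, ‖u x‖ ^ 2) + (∫ x in I01, ‖deriv u x‖ ^ 2) +
    (gagliardoSqE (s - 1) (deriv u)).toReal

/-- The `H^s` norm. -/
def HsNorm {n : ℕ} (s : ℝ) (u : ℝ → En n) : ℝ := Real.sqrt (HsNormSq s u)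

/-- The `H^s` inner product. -/
def HsInner {n : ℕ} (s : ℝ) (u v : ℝ → En n) : ℝ :=
  (∫ x in I01, ⟪u x, v x⟫) + (∫ x in I01, ⟪deriv u x, deriv v x⟫) +
    ∫ x in I01, ∫ y in I01,
      ⟪deriv u y - deriv u x, deriv v y - deriv v x⟫ / dT x y ^ (2 * (s - 1) + 1)

/-- The manifold `𝓜` of embedded closed curves of class `H^s`: injective (on the circle)
immersions. -/
def InM {n : ℕ} (s : ℝ) (γ : ℝ → En n) : Prop :=
  InHs s γ ∧ Set.InjOn γ I01 ∧ ∀ x, deriv γ x ≠ 0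

/-- The length `L(γ)`. -/
def arcLen {n : ℕ} (γ : ℝ → En n) : ℝ := ∫ x in I01, ‖deriv γ x‖

/-- The arc-length distance `d_γ(x,y)`: the length of the shorter of the two arcs of `γ`
between `x` and `y`. -/
def arcDist {n : ℕ} (γ : ℝ → En n) (x y : ℝ) : ℝ :=
  ⨅ k : ℤ, |∫ t in x..(y + (k : ℝ)), ‖deriv γ t‖|

/-- Derivative with respect to arc length, `D_γ u = u' / |γ'|`. -/
def Dg {n : ℕ} (γ u : ℝ → En n) (x : ℝ) : En n := ‖deriv γ x‖⁻¹ • deriv u x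

/-- `𝒟_γ u (x)`, the pointwise linear map `w ↦ |γ'(x)|⁻² ⟪γ'(x), w⟫ u'(x)`. -/
def DDg {n : ℕ} (γ u : ℝ → En n) (x : ℝ) (w : En n) : En n :=
  ((‖deriv γ x‖ ^ 2)⁻¹ * ⟪deriv γ x, w⟫) • deriv u x

/-- The operator `R^s_γ`. -/
def Rop {n : ℕ} (s : ℝ) (γ u : ℝ → En n) (x y : ℝ) : En n :=
  (‖γ y - γ x‖ ^ s)⁻¹ • (u y - u x - DDg γ u x (γ y - γ x))

/-- Density of the measure `μ_γ` with respect to `λ ⊗ λ` on `𝕋 × 𝕋`. -/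
def muW {n : ℕ} (γ : ℝ → En n) (x y : ℝ) : ℝ :=
  ‖deriv γ x‖ * ‖deriv γ y‖ / ‖γ y - γ x‖

/-- Density of the measure `ν_γ` with respect to `λ ⊗ λ` on `𝕋 × 𝕋`. -/
def nuW {n : ℕ} (γ : ℝ → En n) (x y : ℝ) : ℝ :=
  ‖deriv γ x‖ * ‖deriv γ y‖ / arcDist γ x y

/-- The tangent-point energy, valued in `[0,∞]`. -/
def EtpE {n : ℕ} (s : ℝ) (γ : ℝ → En n) : ℝ≥0∞ :=
  ∫⁻ x in I01, ∫⁻ y in I01, ENNReal.ofReal (‖Rop s γ γ x y‖ ^ 2 * muW γ x y)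

/-- The tangent-point energy, real-valued (finite on `𝓜`). -/
def Etp {n : ℕ} (s : ℝ) (γ : ℝ → En n) : ℝ := (EtpE s γ).toReal

/-- `‖R^s_γ u‖²_{L²(ν_γ)}`, valued in `[0,∞]`. -/
def RnuSqE {n : ℕ} (s : ℝ) (γ u : ℝ → En n) : ℝ≥0∞ :=
  ∫⁻ x in I01, ∫⁻ y in I01, ENNReal.ofReal (‖Rop s γ u x y‖ ^ 2 * nuW γ x y)

/-- `‖R^s_γ u‖²_{L²(ν_γ)}`, real-valued. -/
def RnuSq {n : ℕ} (s : ℝ) (γ u : ℝ → En n) : ℝ := (RnuSqE s γ u).toReal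

/-- The squared `γ`-dependent seminorm `[u]²_{H^s(γ)}`, valued in `[0,∞]`. -/
def gagGammaSqE {n : ℕ} (s : ℝ) (γ u : ℝ → En n) : ℝ≥0∞ :=
  ∫⁻ x in I01, ∫⁻ y in I01,
    ENNReal.ofReal (‖Dg γ u y - Dg γ u x‖ ^ 2 / arcDist γ x y ^ (2 * (s - 1)) * nuW γ x y)

/-- The squared `γ`-dependent seminorm `[u]²_{H^s(γ)}`, real-valued. -/
def gagGammaSq {n : ℕ} (s : ℝ) (γ u : ℝ → En n) : ℝ := (gagGammaSqE s γ u).toReal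

/-- The inner product `⟨u,v⟩_{L²(γ)}`. -/
def innerL2g {n : ℕ} (γ u v : ℝ → En n) : ℝ := ∫ x in I01, ⟪u x, v x⟫ * ‖deriv γ x‖

/-- The inner product `⟨u,v⟩_{H¹(γ)}`. -/
def innerH1g {n : ℕ} (γ u v : ℝ → En n) : ℝ :=
  ∫ x in I01, ⟪Dg γ u x, Dg γ v x⟫ * ‖deriv γ x‖

/-- The squared `γ`-dependent norm `‖u‖²_{H^s(γ)}`. -/
def HsGammaNormSq {n : ℕ} (s : ℝ) (γ u : ℝ → En n) : ℝ :=
  innerL2g γ u u + innerH1g γ u u + gagGammaSq s γ u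

/-- The `γ`-dependent norm `‖u‖_{H^s(γ)}`. -/
def HsGammaNorm {n : ℕ} (s : ℝ) (γ u : ℝ → En n) : ℝ := Real.sqrt (HsGammaNormSq s γ u)

/-- The bilinear form `B¹_γ`. -/
def B1 {n : ℕ} (s : ℝ) (γ u v : ℝ → En n) : ℝ :=
  ∫ x in I01, ∫ y in I01, ⟪Rop s γ u x y, Rop s γ v x y⟫ * muW γ x y

/-- The bilinear form `B²_γ`. -/
def B2 {n : ℕ} (s : ℝ) (γ u v : ℝ → En n) : ℝ :=
  ∫ x in I01, ∫ y in I01,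
    ‖Rop s γ γ x y‖ ^ 2 * (⟪u y - u x, v y - v x⟫ / ‖γ y - γ x‖ ^ 2) * muW γ x y

/-- The bilinear form `B³_γ`. -/
def B3 {n : ℕ} (s : ℝ) (γ u v : ℝ → En n) : ℝ :=
  ∫ x in I01, ∫ y in I01,
    ‖Rop s γ γ x y‖ ^ 2 * (⟪Dg γ u x, Dg γ v x⟫ + ⟪Dg γ u y, Dg γ v y⟫) * muW γ x y

/-- The Riemannian metric `G_γ(u,v)`. -/
def Gmet {n : ℕ} (s : ℝ) (γ u v : ℝ → En n) : ℝ :=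
  2 * B1 s γ u v + (2 * s + 1) * B2 s γ u v + B3 s γ u v + innerH1g γ u v + innerL2g γ u v

/-- The distortion `distor(γ) = sup_{x ≠ y} d_γ(x,y)/|γ(y) − γ(x)|`, valued in `[0,∞]`. -/
def distorE {n : ℕ} (γ : ℝ → En n) : ℝ≥0∞ :=
  ⨆ (x ∈ I01) (y ∈ I01) (_ : x ≠ y), ENNReal.ofReal (arcDist γ x y / ‖γ y - γ x‖)

/-- The distortion, real-valued. -/
def distor {n : ℕ} (γ : ℝ → En n) : ℝ := (distorE γ).toReal

/-- A `C¹` path `[0,1] → 𝓜 ⊂ H^s(𝕋,ℝⁿ)` (with respect to the `H^s` topology), recorded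
together with its velocity field `V`. -/
structure C1Path (s : ℝ) (n : ℕ) where
  Γ : ℝ → ℝ → En n
  V : ℝ → ℝ → En n
  mem : ∀ t ∈ Set.Icc (0 : ℝ) 1, InM s (Γ t)
  memV : ∀ t ∈ Set.Icc (0 : ℝ) 1, InHs s (V t)
  isDeriv : ∀ t ∈ Set.Icc (0 : ℝ) 1,
    Tendsto (fun h : ℝ => HsNorm s fun x => h⁻¹ • (Γ (t + h) x - Γ t x) - V t x)
      (𝓝[{h : ℝ | t + h ∈ Set.Icc (0 : ℝ) 1 ∧ h ≠ 0}] 0) (𝓝 0)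
  contV : ∀ t ∈ Set.Icc (0 : ℝ) 1,
    Tendsto (fun τ : ℝ => HsNorm s fun x => V τ x - V t x) (𝓝[Set.Icc (0 : ℝ) 1] t) (𝓝 0)

/-- Length of a path with respect to `G`. -/
def pathLen {s : ℝ} {n : ℕ} (P : C1Path s n) : ℝ :=
  ∫ t in (0 : ℝ)..1, Real.sqrt (Gmet s (P.Γ t) (P.V t) (P.V t))

/-- The path (Dirichlet) energy of a path with respect to `G`. -/
def pathEnergy {s : ℝ} {n : ℕ} (P : C1Path s n) : ℝ :=
  (1 / 2) * ∫ t in (0 : ℝ)..1, Gmet s (P.Γ t) (P.V t) (P.V t)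

/-- The geodesic distance induced by `G`, valued in `[0,∞]` (`∞` if there is no path). -/
def geodDist (s : ℝ) {n : ℕ} (γ₀ γ₁ : ℝ → En n) : ℝ≥0∞ :=
  ⨅ (P : C1Path s n) (_ : P.Γ 0 = γ₀ ∧ P.Γ 1 = γ₁), ENNReal.ofReal (pathLen P)

/-- `U ⊆ 𝓜` is bounded with respect to the geodesic distance `d_G`. -/
def GBounded (s : ℝ) {n : ℕ} (U : Set (ℝ → En n)) : Prop :=
  (∀ γ ∈ U, InM s γ) ∧
    ∃ γ₀, InM s γ₀ ∧ ∃ R : ℝ, ∀ γ ∈ U, geodDist s γ γ₀ ≤ ENNReal.ofReal R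

/-- Weak convergence in the Hilbert space `H^s(𝕋,ℝⁿ)`. -/
def WeakHsTendsto {n : ℕ} (s : ℝ) (γk : ℕ → ℝ → En n) (γ : ℝ → En n) : Prop :=
  ∀ v : ℝ → En n, InHs s v →
    Tendsto (fun k => HsInner s (γk k) v) atTop (𝓝 (HsInner s γ v))

/-- Directional derivative of `γ ↦ G_γ(u,v)` at `γ` in direction `w`. -/
def DGdir {n : ℕ} (s : ℝ) (γ w u v : ℝ → En n) : ℝ :=
  deriv (fun t : ℝ => Gmet s (fun x => γ x + t • w x) u v) 0

/-- `F'` is the derivative of the path `F` with respect to the `H^s` norm, on `S`. -/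
def IsHsDerivOn {n : ℕ} (s : ℝ) (F F' : ℝ → ℝ → En n) (S : Set ℝ) : Prop :=
  ∀ t ∈ S,
    Tendsto (fun h : ℝ => HsNorm s fun x => h⁻¹ • (F (t + h) x - F t x) - F' t x)
      (𝓝[{h : ℝ | t + h ∈ S ∧ h ≠ 0}] 0) (𝓝 0)

/-- The path `F` is continuous on `S` with respect to the `H^s` norm. -/
def HsContOn {n : ℕ} (s : ℝ) (F : ℝ → ℝ → En n) (S : Set ℝ) : Prop :=
  ∀ t ∈ S, Tendsto (fun τ : ℝ => HsNorm s fun x => F τ x - F t x) (𝓝[S] t) (𝓝 0)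

/-- A solution of the geodesic initial value problem on `[0,∞)`, recorded as a triple
(position `Γ`, velocity `V`, acceleration `W`); the geodesic equation
`Γ̈ + A_Γ(Γ̇)Γ̇ = 0` is expressed weakly via the Koszul formula for the
Christoffel operator `A`. -/
def GeodesicSol {n : ℕ} (s : ℝ) (γ₀ v₀ : ℝ → En n) (Γ V W : ℝ → ℝ → En n) : Prop :=
  (∀ t ∈ Set.Ici (0 : ℝ), InM s (Γ t) ∧ InHs s (V t) ∧ InHs s (W t)) ∧
  Γ 0 = γ₀ ∧ V 0 = v₀ ∧
  IsHsDerivOn s Γ V (Set.Ici 0) ∧ IsHsDerivOn s V W (Set.Ici 0) ∧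
  HsContOn s V (Set.Ici 0) ∧ HsContOn s W (Set.Ici 0) ∧
  ∀ t ∈ Set.Ici (0 : ℝ), ∀ w : ℝ → En n, InHs s w →
    Gmet s (Γ t) (W t) w + DGdir s (Γ t) (V t) (V t) w
      - (1 / 2) * DGdir s (Γ t) w (V t) (V t) = 0

/-!
An embedded curve `γ` is bi-Lipschitz with respect to the distance of the circle, so `|γ y - γ x|`
may be replaced by `|h|`, `h = y - x`, at the cost of constants. By the fundamental theorem of
calculus the numerator `N x y = u y - u x - 𝒟_γ u x (γ y - γ x)` of `R^s_γ u` is `h` times the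
average over the segment of increments of `u'` and, weighted by `‖u'‖_∞`, of `γ'`; a Fubini and
scaling argument bounds the energy of such averaged increments by the Gagliardo seminorm, whence
`B¹ ≲ [u']² + ‖u'‖_∞² [γ']²`. Conversely `N x y + N y x` recovers `h (u' y - u' x)` up to
increments of `γ'`, whence `[u']² ≲ B¹ + ‖u'‖_∞² [γ']²`. Both error terms are absorbed by the Morrey
inequality `‖f‖_∞² ≤ η [f]²_{H^σ} + C_η ‖f‖²_{L²}` with `σ = s - 1 > 1/2`, obtained by telescoping
averages of `f` over shrinking intervals. Finally `H^s` is complete, by uniform convergence of `u`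
and `u'` and Fatou's lemma for the seminorm, so the Riesz representation theorem applies to `G_γ`.
-/

section Circle

lemma dT_eq_norm_coe (x y : ℝ) : dT x y = ‖((x - y : ℝ) : UnitAddCircle)‖ := by
  rw [UnitAddCircle.norm_eq]
  exact le_antisymm (ciInf_le ⟨0, by rintro _ ⟨k, rfl⟩; positivity⟩ _)
    (le_ciInf fun k => round_le _ k)

lemma dT_nonneg (x y : ℝ) : 0 ≤ dT x y := by
  rw [dT_eq_norm_coe]
  positivity

lemma dT_le_abs_sub (x y : ℝ) : dT x y ≤ |x - y| := by
  rw [dT_eq_norm_coe, UnitAddCircle.norm_eq]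
  simpa only [Int.cast_zero, sub_zero] using round_le (x - y) 0

lemma periodic_dT (x : ℝ) : Function.Periodic (dT x) 1 := fun y => by
  rw [dT_eq_norm_coe, dT_eq_norm_coe, sub_add_eq_sub_sub, AddCircle.coe_sub,
    AddCircle.coe_period, sub_zero]

lemma dT_add_right {h : ℝ} (x : ℝ) (hh : |h| ≤ 1 / 2) : dT x (x + h) = |h| := by
  rw [dT_eq_norm_coe, sub_add_cancel_left, ← abs_neg,
    (AddCircle.norm_coe_eq_abs_iff (1 : ℝ) one_ne_zero).2 (by simpa using hh)]

lemma continuous_dT : Continuous fun z : ℝ × ℝ => dT z.1 z.2 := by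
  simp_rw [dT_eq_norm_coe]
  exact ((AddCircle.continuous_mk' 1).comp (continuous_fst.sub continuous_snd)).norm

lemma dT_eq_zero_iff {x y : ℝ} (hx : x ∈ I01) (hy : y ∈ I01) : dT x y = 0 ↔ x = y := by
  rw [dT_eq_norm_coe, norm_eq_zero, AddCircle.coe_sub, sub_eq_zero]
  exact AddCircle.coe_eq_coe_iff_of_mem_Ico (a := 0) (by simpa [I01] using hx)
    (by simpa [I01] using hy)

/-- The fundamental domain of the circle centred at `0`, on which `dT 0` is the absolute value. -/
def symmDomain : Set ℝ := Ioc (-(1 / 2)) (1 / 2)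

lemma abs_le_of_mem_symmDomain {h : ℝ} (hh : h ∈ symmDomain) : |h| ≤ 1 / 2 :=
  abs_le.2 ⟨hh.1.le, hh.2⟩

lemma measurableSet_I01 : MeasurableSet I01 := measurableSet_Ico

lemma measurableSet_symmDomain : MeasurableSet symmDomain := measurableSet_Ioc

instance isProbabilityMeasure_restrict_I01 : IsProbabilityMeasure (volume.restrict I01) :=
  ⟨by simp [I01]⟩

lemma integrable_I01_of_continuous {E : Type*} [NormedAddCommGroup E] {f : ℝ → E}
    (hf : Continuous f) : Integrable f (volume.restrict I01) :=
  (hf.integrableOn_Icc (a := 0) (b := 1)).mono_set Ico_subset_Icc_self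

lemma integral_I01_eq_intervalIntegral {E : Type*} [NormedAddCommGroup E] [NormedSpace ℝ E]
    (f : ℝ → E) : ∫ t in I01, f t = ∫ t in (0 : ℝ)..1, f t := by
  rw [intervalIntegral.integral_of_le zero_le_one, I01, setIntegral_congr_set Ico_ae_eq_Ioc]

lemma continuous_integral_I01 {X E : Type*} [TopologicalSpace X] [NormedAddCommGroup E]
    [NormedSpace ℝ E] {F : X → ℝ → E} (hF : Continuous F.uncurry) :
    Continuous fun x => ∫ t in I01, F x t := by
  simp_rw [integral_I01_eq_intervalIntegral]
  exact intervalIntegral.continuous_parametric_intervalIntegral_of_continuous' hF 0 1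

lemma lintegral_I01_eq_lintegral_symmDomain {F : ℝ → ℝ≥0∞} (hF : Function.Periodic F 1) (x : ℝ) :
    ∫⁻ y in I01, F y = ∫⁻ h in symmDomain, F (x + h) := by
  have hlift (t : ℝ) : ∫⁻ y in Ioc t (t + 1), F y = ∫⁻ b : UnitAddCircle, hF.lift b :=
    UnitAddCircle.lintegral_preimage t hF.lift
  have himage : (x + ·) '' symmDomain = Ioc (x - 1 / 2) (x - 1 / 2 + 1) := by
    rw [symmDomain, image_const_add_Ioc]
    ring_nf
  rw [(measurePreserving_add_left volume x).setLIntegral_comp_emb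
    (measurableEmbedding_addLeft x) F symmDomain, himage, hlift, ← hlift 0, zero_add]
  exact setLIntegral_congr Ico_ae_eq_Ioc

lemma norm_le_of_periodic {E : Type*} [Norm E] {f : ℝ → E}
    (hf : Function.Periodic f 1) {S : ℝ} (hS : ∀ x ∈ I01, ‖f x‖ ≤ S) (x : ℝ) : ‖f x‖ ≤ S := by
  obtain ⟨y, hy, hxy⟩ := hf.exists_mem_Ico₀ one_pos x
  exact hxy ▸ hS y hy

lemma exists_norm_le_of_periodic_of_continuous {E : Type*} [SeminormedAddCommGroup E] {f : ℝ → E}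
    (hf : Function.Periodic f 1) (hfc : Continuous f) : ∃ S, ∀ x, ‖f x‖ ≤ S := by
  obtain ⟨S, hS⟩ := (hf.isBounded_of_continuous one_ne_zero hfc).exists_norm_le
  exact ⟨S, fun x => hS _ (mem_range_self x)⟩

end Circle

section SquaredNorms

variable {α : Type*} [MeasurableSpace α] {μ : Measure α}
variable {E : Type*} [NormedAddCommGroup E]

lemma norm_add_sq_le_two_mul (a b : E) : ‖a + b‖ ^ 2 ≤ 2 * (‖a‖ ^ 2 + ‖b‖ ^ 2) :=
  (pow_le_pow_left₀ (norm_nonneg _) (norm_add_le a b) 2).trans add_sq_le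

lemma norm_sub_sq_le_two_mul (a b : E) : ‖a - b‖ ^ 2 ≤ 2 * (‖a‖ ^ 2 + ‖b‖ ^ 2) :=
  (pow_le_pow_left₀ (norm_nonneg _) (norm_sub_le a b) 2).trans add_sq_le

lemma enorm_sq_eq_ofReal (a : E) : ‖a‖ₑ ^ 2 = ENNReal.ofReal (‖a‖ ^ 2) := by
  rw [ENNReal.ofReal_pow (norm_nonneg _), ofReal_norm]

lemma enorm_integral_sq_le [NormedSpace ℝ E] [IsProbabilityMeasure μ] {f : α → E}
    (hf : AEStronglyMeasurable f μ) : ‖∫ a, f a ∂μ‖ₑ ^ 2 ≤ ∫⁻ a, ‖f a‖ₑ ^ 2 ∂μ := by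
  have hL2 := eLpNorm_nnreal_pow_eq_lintegral (f := f) (μ := μ) (two_ne_zero (α := NNReal))
  simp only [NNReal.coe_ofNat, ENNReal.rpow_ofNat, ENNReal.coe_ofNat] at hL2
  calc ‖∫ a, f a ∂μ‖ₑ ^ 2 ≤ eLpNorm f 1 μ ^ 2 := by
        gcongr
        exact eLpNorm_one_eq_lintegral_enorm (f := f) ▸ enorm_integral_le_lintegral_enorm f
    _ ≤ eLpNorm f 2 μ ^ 2 := by
        gcongr
        exact eLpNorm_le_eLpNorm_of_exponent_le one_le_two hf
    _ = ∫⁻ a, ‖f a‖ₑ ^ 2 ∂μ := hL2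

lemma enorm_integral_sub_integral_sq_le [NormedSpace ℝ E] [CompleteSpace E]
    [IsProbabilityMeasure μ] {f g : α → E} (hf : Integrable f μ) (hg : Integrable g μ) :
    ‖(∫ a, f a ∂μ) - ∫ b, g b ∂μ‖ₑ ^ 2 ≤ ∫⁻ z, ‖f z.1 - g z.2‖ₑ ^ 2 ∂μ.prod μ := by
  have hf' : Integrable (fun z : α × α => f z.1) (μ.prod μ) := hf.comp_fst μ
  have hg' : Integrable (fun z : α × α => g z.2) (μ.prod μ) := hg.comp_snd μ
  have hdiff : (∫ a, f a ∂μ) - ∫ b, g b ∂μ = ∫ z, (f z.1 - g z.2) ∂μ.prod μ := by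
    rw [integral_sub hf' hg', integral_fun_fst, integral_fun_snd]
    simp
  rw [hdiff]
  exact enorm_integral_sq_le (hf'.sub hg').aestronglyMeasurable

lemma lintegral_comp_mul_add_le {F : ℝ → ℝ≥0∞} (hF : Measurable F) {a b : ℝ} (ha : a ≠ 0)
    {S T : Set ℝ} (hS : MeasurableSet S) (hT : MeasurableSet T)
    (hST : MapsTo (fun t => a * t + b) S T) :
    ∫⁻ t in S, F (a * t + b) ≤ ENNReal.ofReal |a|⁻¹ * ∫⁻ y in T, F y := by
  have hvol : ∫⁻ t, T.indicator F (a * t + b) = ENNReal.ofReal |a|⁻¹ * ∫⁻ y, T.indicator F y := by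
    have hmap : ∫⁻ t, T.indicator F (a * t + b) =
        ∫⁻ z, T.indicator F (z + b) ∂(Measure.map (a * ·) volume) :=
      (lintegral_map ((hF.indicator hT).comp (measurable_add_const b)) (by fun_prop)).symm
    rw [hmap, Real.map_volume_mul_left ha, lintegral_smul_measure, lintegral_add_right_eq_self,
      abs_inv, smul_eq_mul]
  rw [← lintegral_indicator hS, ← lintegral_indicator hT, ← hvol]
  refine lintegral_mono fun t => ?_
  by_cases ht : t ∈ S
  · rw [indicator_of_mem ht, indicator_of_mem (hST ht)]
  · simp [ht]

end SquaredNorms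

section Gagliardo

variable {E : Type*} [NormedAddCommGroup E]

/-- The integrand of the Gagliardo seminorm `gagliardoSqE σ f`, as a function on the product. -/
def gagliardoKernel (σ : ℝ) (f : ℝ → E) (z : ℝ × ℝ) : ℝ≥0∞ :=
  ENNReal.ofReal (‖f z.2 - f z.1‖ ^ 2 / dT z.1 z.2 ^ (2 * σ + 1))

lemma measurable_gagliardoKernel (σ : ℝ) {f : ℝ → E} (hf : Continuous f) :
    Measurable (gagliardoKernel σ f) := by
  have hnum : Continuous fun z : ℝ × ℝ => ‖f z.2 - f z.1‖ ^ 2 := by fun_prop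
  exact (hnum.measurable.div (continuous_dT.measurable.pow_const _)).ennreal_ofReal

lemma enorm_sub_sq_le_mul_gagliardoKernel {σ : ℝ} (hσ : 0 ≤ 2 * σ + 1) (f : ℝ → E) {x y r : ℝ}
    (hx : x ∈ I01) (hy : y ∈ I01) (hr : |x - y| ≤ r) :
    ‖f x - f y‖ₑ ^ 2 ≤ ENNReal.ofReal (r ^ (2 * σ + 1)) * gagliardoKernel σ f (x, y) := by
  have hr0 : 0 ≤ r := (abs_nonneg _).trans hr
  rw [enorm_sq_eq_ofReal, gagliardoKernel, ← ENNReal.ofReal_mul (by positivity), norm_sub_rev]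
  refine ENNReal.ofReal_le_ofReal ?_
  rcases (dT_nonneg x y).eq_or_lt with hd | hd
  · simp [(dT_eq_zero_iff hx hy).1 hd.symm]
  · have hle : dT x y ^ (2 * σ + 1) ≤ r ^ (2 * σ + 1) :=
      Real.rpow_le_rpow hd.le ((dT_le_abs_sub x y).trans hr) hσ
    rw [mul_div_assoc', le_div_iff₀ (Real.rpow_pos_of_pos hd _), mul_comm]
    gcongr

end Gagliardo

section Morrey

variable {E : Type*} [NormedAddCommGroup E] [NormedSpace ℝ E]

/-- The average of `f` over the image of `[0,1)` under the homothety of centre `x` and ratio `r`. -/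
def shrinkAvg (f : ℝ → E) (x r : ℝ) : E := ∫ t in I01, f (r * t + (1 - r) * x)

lemma mapsTo_homothety_I01 {x r : ℝ} (hx : x ∈ I01) (hr : 0 ≤ r) (hr1 : r ≤ 1) :
    MapsTo (fun t => r * t + (1 - r) * x) I01 I01 := fun _ ht =>
  convex_Ico (0 : ℝ) 1 ht hx hr (sub_nonneg.2 hr1) (by ring)

lemma norm_shrinkAvg_sq_le {f : ℝ → E} (hf : Continuous f) {x r : ℝ} (hx : x ∈ I01) (hr : 0 < r)
    (hr1 : r ≤ 1) : ‖shrinkAvg f x r‖ ^ 2 ≤ r⁻¹ * ∫ y in I01, ‖f y‖ ^ 2 := by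
  rw [← ENNReal.ofReal_le_ofReal_iff (by positivity), ← enorm_sq_eq_ofReal]
  calc ‖shrinkAvg f x r‖ₑ ^ 2 ≤ ∫⁻ t in I01, ‖f (r * t + (1 - r) * x)‖ₑ ^ 2 :=
        enorm_integral_sq_le (Continuous.aestronglyMeasurable (by fun_prop))
    _ ≤ ENNReal.ofReal |r|⁻¹ * ∫⁻ y in I01, ‖f y‖ₑ ^ 2 :=
        lintegral_comp_mul_add_le (F := fun y => ‖f y‖ₑ ^ 2)
          (Continuous.measurable (by fun_prop)) hr.ne' measurableSet_I01 measurableSet_I01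
          (mapsTo_homothety_I01 hx hr.le hr1)
    _ = ENNReal.ofReal (r⁻¹ * ∫ y in I01, ‖f y‖ ^ 2) := by
        rw [abs_of_pos hr, ENNReal.ofReal_mul (by positivity),
          ofReal_integral_eq_lintegral_ofReal (integrable_I01_of_continuous (by fun_prop))
            (ae_of_all _ fun _ => by positivity)]
        simp_rw [enorm_sq_eq_ofReal]

lemma lintegral_lintegral_comp_homothety_le {K : ℝ × ℝ → ℝ≥0∞} (hK : Measurable K) {x r r' : ℝ}
    (hx : x ∈ I01) (hr : 0 < r) (hr1 : r ≤ 1) (hr' : 0 < r') (hr1' : r' ≤ 1) :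
    ∫⁻ t in I01, ∫⁻ τ in I01, K (r * t + (1 - r) * x, r' * τ + (1 - r') * x) ≤
      ENNReal.ofReal (r'⁻¹ * r⁻¹) * ∫⁻ y in I01, ∫⁻ z in I01, K (y, z) := by
  calc _ ≤ ∫⁻ t in I01, ENNReal.ofReal |r'|⁻¹ * ∫⁻ z in I01, K (r * t + (1 - r) * x, z) := by
        gcongr with t
        exact lintegral_comp_mul_add_le (F := fun z => K (_, z)) (by fun_prop) hr'.ne'
          measurableSet_I01 measurableSet_I01 (mapsTo_homothety_I01 hx hr'.le hr1')
    _ = ENNReal.ofReal |r'|⁻¹ * ∫⁻ t in I01, ∫⁻ z in I01, K (r * t + (1 - r) * x, z) :=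
        lintegral_const_mul' _ _ ENNReal.ofReal_ne_top
    _ ≤ ENNReal.ofReal |r'|⁻¹ *
          (ENNReal.ofReal |r|⁻¹ * ∫⁻ y in I01, ∫⁻ z in I01, K (y, z)) := by
        gcongr
        exact lintegral_comp_mul_add_le (F := fun y => ∫⁻ z in I01, K (y, z))
          hK.lintegral_prod_right' hr.ne' measurableSet_I01 measurableSet_I01
          (mapsTo_homothety_I01 hx hr.le hr1)
    _ = _ := by
        rw [← mul_assoc, ← ENNReal.ofReal_mul (by positivity), abs_of_pos hr, abs_of_pos hr']

variable [CompleteSpace E]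

lemma norm_shrinkAvg_sub_sq_le {σ : ℝ} (hσ : 1 / 2 < σ) {f : ℝ → E} (hf : Continuous f)
    (hfin : gagliardoSqE σ f < ⊤) {x r : ℝ} (hx : x ∈ I01) (hr : 0 < r) (hr1 : r ≤ 1) :
    ‖shrinkAvg f x r - shrinkAvg f x (r / 2)‖ ^ 2 ≤
      2 * r ^ (2 * σ - 1) * (gagliardoSqE σ f).toReal := by
  have hr2 : r / 2 ≤ 1 := by linarith
  have hpt : ∀ t ∈ I01, ∀ τ ∈ I01,
      ‖f (r * t + (1 - r) * x) - f (r / 2 * τ + (1 - r / 2) * x)‖ₑ ^ 2 ≤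
        ENNReal.ofReal (r ^ (2 * σ + 1)) *
          gagliardoKernel σ f (r * t + (1 - r) * x, r / 2 * τ + (1 - r / 2) * x) := by
    intro t ht τ hτ
    refine enorm_sub_sq_le_mul_gagliardoKernel (by linarith) f
      (mapsTo_homothety_I01 hx hr.le hr1 ht)
      (mapsTo_homothety_I01 hx (half_pos hr).le hr2 hτ) (abs_le.2 ⟨?_, ?_⟩) <;>
    nlinarith [ht.1, ht.2, hx.1, hx.2, hτ.1, hτ.2]
  rw [← ENNReal.ofReal_le_ofReal_iff (by positivity), ← enorm_sq_eq_ofReal]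
  calc ‖shrinkAvg f x r - shrinkAvg f x (r / 2)‖ₑ ^ 2
      ≤ ∫⁻ t in I01, ∫⁻ τ in I01,
          ‖f (r * t + (1 - r) * x) - f (r / 2 * τ + (1 - r / 2) * x)‖ₑ ^ 2 := by
        refine (enorm_integral_sub_integral_sq_le (integrable_I01_of_continuous (by fun_prop))
          (integrable_I01_of_continuous (by fun_prop))).trans_eq (lintegral_prod _ ?_)
        exact Measurable.aemeasurable (Continuous.measurable (by fun_prop))
    _ ≤ ∫⁻ t in I01, ∫⁻ τ in I01, ENNReal.ofReal (r ^ (2 * σ + 1)) *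
          gagliardoKernel σ f (r * t + (1 - r) * x, r / 2 * τ + (1 - r / 2) * x) :=
        setLIntegral_mono' measurableSet_I01 fun t ht =>
          setLIntegral_mono' measurableSet_I01 fun τ hτ => hpt t ht τ hτ
    _ ≤ ENNReal.ofReal (r ^ (2 * σ + 1)) *
          (ENNReal.ofReal ((r / 2)⁻¹ * r⁻¹) * gagliardoSqE σ f) := by
        simp_rw [lintegral_const_mul' _ _ ENNReal.ofReal_ne_top]
        gcongr
        exact lintegral_lintegral_comp_homothety_le (measurable_gagliardoKernel σ hf) hx hr hr1
          (half_pos hr) hr2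
    _ = ENNReal.ofReal (2 * r ^ (2 * σ - 1) * (gagliardoSqE σ f).toReal) := by
        have hpow : r ^ (2 * σ + 1) = r ^ (2 * σ - 1) * r ^ 2 := by
          rw [← Real.rpow_natCast, ← Real.rpow_add hr]
          ring_nf
        rw [ENNReal.ofReal_mul (p := 2 * r ^ (2 * σ - 1)) (by positivity),
          ENNReal.ofReal_toReal hfin.ne, ← mul_assoc, ← ENNReal.ofReal_mul (by positivity), hpow]
        congr 2
        field_simp

lemma tendsto_shrinkAvg {f : ℝ → E} (hf : Continuous f) (x : ℝ) :
    Tendsto (shrinkAvg f x) (𝓝 0) (𝓝 (f x)) := by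
  have hcont : Continuous (shrinkAvg f x) := continuous_integral_I01 (by fun_prop)
  simpa [shrinkAvg] using hcont.tendsto 0

lemma norm_shrinkAvg_sub_le {σ : ℝ} (hσ : 1 / 2 < σ) {f : ℝ → E} (hf : Continuous f)
    (hfin : gagliardoSqE σ f < ⊤) {x : ℝ} (hx : x ∈ I01) (k : ℕ) :
    ‖shrinkAvg f x ((1 / 2) ^ k) - f x‖ ≤ √(2 * (gagliardoSqE σ f).toReal) *
      ((1 / 2) ^ (σ - 1 / 2)) ^ k / (1 - (1 / 2) ^ (σ - 1 / 2)) := by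
  set q : ℝ := (1 / 2) ^ (σ - 1 / 2) with hq
  have hq1 : q < 1 := Real.rpow_lt_one (by norm_num) (by norm_num) (by linarith)
  have hstep (k : ℕ) : dist (shrinkAvg f x ((1 / 2) ^ k)) (shrinkAvg f x ((1 / 2) ^ (k + 1))) ≤
      √(2 * (gagliardoSqE σ f).toReal) * q ^ k := by
    have hpow : ((1 / 2 : ℝ) ^ k) ^ (2 * σ - 1) = (q ^ k) ^ 2 := by
      rw [hq, ← Real.rpow_natCast, ← Real.rpow_natCast, ← Real.rpow_natCast,
        ← Real.rpow_mul (by positivity), ← Real.rpow_mul (by positivity),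
        ← Real.rpow_mul (by positivity)]
      push_cast
      ring_nf
    rw [dist_eq_norm, pow_succ, mul_one_div]
    refine le_of_pow_le_pow_left₀ two_ne_zero (by positivity)
      ((norm_shrinkAvg_sub_sq_le hσ hf hfin hx (by positivity)
        (pow_le_one₀ (by norm_num) (by norm_num))).trans_eq ?_)
    rw [mul_pow, Real.sq_sqrt (by positivity), hpow]
    ring
  rw [← dist_eq_norm]
  exact dist_le_of_le_geometric_of_tendsto q _ hq1 hstep ((tendsto_shrinkAvg hf x).comp
    (tendsto_pow_atTop_nhds_zero_of_lt_one (by norm_num) (by norm_num))) k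

lemma exists_norm_sq_le_gagliardoSqE_add {σ η : ℝ} (hσ : 1 / 2 < σ) (hη : 0 < η) :
    ∃ C : ℝ, 0 < C ∧ ∀ f : ℝ → E, Continuous f → gagliardoSqE σ f < ⊤ → ∀ x ∈ I01,
      ‖f x‖ ^ 2 ≤ η * (gagliardoSqE σ f).toReal + C * ∫ y in I01, ‖f y‖ ^ 2 := by
  set q : ℝ := (1 / 2) ^ (σ - 1 / 2)
  have hq1 : q < 1 := Real.rpow_lt_one (by norm_num) (by norm_num) (by linarith)
  have hlim : Tendsto (fun k : ℕ => 4 * (q ^ k / (1 - q)) ^ 2) atTop (𝓝 0) := by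
    simpa using (((tendsto_pow_atTop_nhds_zero_of_lt_one (by positivity) hq1).div_const
      (1 - q)).pow 2).const_mul 4
  obtain ⟨k, hk⟩ := (hlim.eventually (gt_mem_nhds hη)).exists
  refine ⟨2 * 2 ^ k, by positivity, fun f hf hfin x hx => ?_⟩
  set A := shrinkAvg f x ((1 / 2) ^ k)
  have hA : ‖A‖ ^ 2 ≤ 2 ^ k * ∫ y in I01, ‖f y‖ ^ 2 := by
    have hinv : ((1 / 2 : ℝ) ^ k)⁻¹ = 2 ^ k := by rw [← inv_pow, one_div, inv_inv]
    exact hinv ▸ norm_shrinkAvg_sq_le hf hx (by positivity)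
      (pow_le_one₀ (by norm_num) (by norm_num))
  have hdiff : ‖A - f x‖ ^ 2 ≤ 2 * (gagliardoSqE σ f).toReal * (q ^ k / (1 - q)) ^ 2 := by
    calc _ ≤ (√(2 * (gagliardoSqE σ f).toReal) * q ^ k / (1 - q)) ^ 2 := by
          gcongr
          exact norm_shrinkAvg_sub_le hσ hf hfin hx k
      _ = _ := by rw [mul_div_assoc, mul_pow, Real.sq_sqrt (by positivity)]
  have htri : ‖f x‖ ^ 2 ≤ 2 * (‖A‖ ^ 2 + ‖A - f x‖ ^ 2) := by
    simpa using norm_sub_sq_le_two_mul A (A - f x)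
  nlinarith [ENNReal.toReal_nonneg (a := gagliardoSqE σ f)]

end Morrey

section AveragedOscillation

variable {E : Type*} [NormedAddCommGroup E]

/-- The mean square oscillation of `f` on the segment from `x` to `x + h`. For `f = u'` it bounds
the first-order Taylor remainder of `u`. -/
def avgOsc (f : ℝ → E) (x h : ℝ) : ℝ := ∫ t in I01, ‖f (x + t * h) - f x‖ ^ 2

lemma avgOsc_nonneg (f : ℝ → E) (x h : ℝ) : 0 ≤ avgOsc f x h :=
  integral_nonneg fun _ => by positivity

lemma continuous_avgOsc {f : ℝ → E} (hf : Continuous f) :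
    Continuous fun z : ℝ × ℝ => avgOsc f z.1 z.2 :=
  continuous_integral_I01 (by fun_prop)

lemma ofReal_avgOsc {f : ℝ → E} (hf : Continuous f) (x h : ℝ) :
    ENNReal.ofReal (avgOsc f x h) = ∫⁻ t in I01, ENNReal.ofReal (‖f (x + t * h) - f x‖ ^ 2) :=
  ofReal_integral_eq_lintegral_ofReal (integrable_I01_of_continuous (by fun_prop))
    (ae_of_all _ fun _ => by positivity)

lemma lintegral_comp_mul_div_rpow_le {g : ℝ → ℝ} (hg : Measurable g) {p : ℝ} (hp : 1 ≤ p)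
    {t : ℝ} (ht : 0 < t) (ht1 : t ≤ 1) :
    ∫⁻ h in symmDomain, ENNReal.ofReal (g (t * h) / |h| ^ p) ≤
      ∫⁻ h in symmDomain, ENNReal.ofReal (g h / |h| ^ p) := by
  set F : ℝ → ℝ≥0∞ := fun h => ENNReal.ofReal (g h / |h| ^ p) with hF
  have hFm : Measurable F :=
    (hg.div ((continuous_abs.measurable).pow_const p)).ennreal_ofReal
  have hscale (h : ℝ) :
      ENNReal.ofReal (g (t * h) / |h| ^ p) = ENNReal.ofReal (t ^ p) * F (t * h + 0) := by
    have htp : t ^ p ≠ 0 := (Real.rpow_pos_of_pos ht p).ne'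
    simp only [hF]
    rw [← ENNReal.ofReal_mul (by positivity), add_zero, abs_mul, abs_of_pos ht,
      Real.mul_rpow ht.le (abs_nonneg _), ← mul_div_assoc, mul_div_mul_left _ _ htp]
  have hmaps : MapsTo (fun h => t * h + 0) symmDomain symmDomain := fun h hh =>
    ⟨by nlinarith [hh.1, hh.2], by nlinarith [hh.1, hh.2]⟩
  have hcoef : t ^ p * |t|⁻¹ ≤ 1 := by
    rw [abs_of_pos ht, ← Real.rpow_neg_one, ← Real.rpow_add ht]
    exact Real.rpow_le_one ht.le ht1 (by linarith)
  calc ∫⁻ h in symmDomain, ENNReal.ofReal (g (t * h) / |h| ^ p)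
      = ENNReal.ofReal (t ^ p) * ∫⁻ h in symmDomain, F (t * h + 0) := by
        simp_rw [hscale]
        exact lintegral_const_mul' _ _ ENNReal.ofReal_ne_top
    _ ≤ ENNReal.ofReal (t ^ p) * (ENNReal.ofReal |t|⁻¹ * ∫⁻ h in symmDomain, F h) := by
        gcongr
        exact lintegral_comp_mul_add_le hFm ht.ne' measurableSet_symmDomain
          measurableSet_symmDomain hmaps
    _ ≤ ∫⁻ h in symmDomain, F h := by
        rw [← mul_assoc, ← ENNReal.ofReal_mul (by positivity)]
        exact mul_le_of_le_one_left' (ENNReal.ofReal_le_one.2 hcoef)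

lemma lintegral_avgOsc_div_rpow_le {f : ℝ → E} (hf : Continuous f) {p : ℝ} (hp : 1 ≤ p) (x : ℝ) :
    ∫⁻ h in symmDomain, ENNReal.ofReal (avgOsc f x h / |h| ^ p) ≤
      ∫⁻ h in symmDomain, ENNReal.ofReal (‖f (x + h) - f x‖ ^ 2 / |h| ^ p) := by
  have hfubini : ∫⁻ h in symmDomain, ENNReal.ofReal (avgOsc f x h / |h| ^ p) =
      ∫⁻ t in I01, ∫⁻ h in symmDomain,
        ENNReal.ofReal (‖f (x + t * h) - f x‖ ^ 2 / |h| ^ p) := by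
    rw [lintegral_lintegral_swap]
    · refine lintegral_congr fun h => ?_
      rw [div_eq_mul_inv, ENNReal.ofReal_mul (avgOsc_nonneg _ _ _), ofReal_avgOsc hf,
        ← lintegral_mul_const' _ _ ENNReal.ofReal_ne_top]
      simp_rw [div_eq_mul_inv, ENNReal.ofReal_mul (sq_nonneg _)]
    · have hnum : Continuous fun z : ℝ × ℝ => ‖f (x + z.1 * z.2) - f x‖ ^ 2 := by fun_prop
      exact (hnum.measurable.div
        ((measurable_snd.abs).pow_const p)).ennreal_ofReal.aemeasurable
  calc _ ≤ ∫⁻ t in I01, ∫⁻ h in symmDomain,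
          ENNReal.ofReal (‖f (x + h) - f x‖ ^ 2 / |h| ^ p) := by
        refine hfubini.trans_le (setLIntegral_mono' measurableSet_I01 fun t ht => ?_)
        rcases ht.1.eq_or_lt with rfl | ht0
        · simp
        · exact lintegral_comp_mul_div_rpow_le (g := fun h => ‖f (x + h) - f x‖ ^ 2)
            (Continuous.measurable (by fun_prop)) hp ht0 ht.2.le
    _ = _ := by simp

lemma gagliardoSqE_eq_lintegral_translate (σ : ℝ) {f : ℝ → E} (hf : Function.Periodic f 1) :
    gagliardoSqE σ f = ∫⁻ x in I01, ∫⁻ h in symmDomain,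
      ENNReal.ofReal (‖f (x + h) - f x‖ ^ 2 / |h| ^ (2 * σ + 1)) := by
  refine lintegral_congr fun x => ?_
  rw [lintegral_I01_eq_lintegral_symmDomain (fun y => by rw [hf y, periodic_dT x y]) x]
  exact setLIntegral_congr_fun measurableSet_symmDomain fun h hh => by
    rw [dT_add_right x (abs_le_of_mem_symmDomain hh)]

lemma lintegral_avgOsc_le_gagliardoSqE {σ : ℝ} (hσ : 0 ≤ σ) {f : ℝ → E}
    (hf : Function.Periodic f 1) (hfc : Continuous f) :
    ∫⁻ x in I01, ∫⁻ h in symmDomain, ENNReal.ofReal (avgOsc f x h / |h| ^ (2 * σ + 1)) ≤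
      gagliardoSqE σ f := by
  rw [gagliardoSqE_eq_lintegral_translate σ hf]
  exact lintegral_mono fun x => lintegral_avgOsc_div_rpow_le hfc (by linarith) x

end AveragedOscillation

section Taylor

variable {E : Type*} [NormedAddCommGroup E] [NormedSpace ℝ E]

lemma periodic_deriv {u : ℝ → E} {c : ℝ} (hu : Function.Periodic u c) :
    Function.Periodic (deriv u) c := fun x => by
  rw [← deriv_comp_add_const, funext hu]

lemma norm_add_sub_le_of_norm_deriv_le {u : ℝ → E} (hu : Differentiable ℝ u) {S : ℝ}
    (hS : ∀ x, ‖deriv u x‖ ≤ S) (x h : ℝ) : ‖u (x + h) - u x‖ ≤ S * |h| := by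
  simpa using convex_univ.norm_image_sub_le_of_norm_deriv_le (fun z _ => hu z)
    (fun z _ => hS z) (mem_univ x) (mem_univ (x + h))

variable [CompleteSpace E]

lemma add_sub_eq_smul_integral_deriv {u : ℝ → E} (hu : ContDiff ℝ 1 u) (x h : ℝ) :
    u (x + h) - u x = h • ∫ t in I01, deriv u (x + t * h) := by
  have hderiv (t : ℝ) : HasDerivAt (fun t => u (x + t * h)) (h • deriv u (x + t * h)) t :=
    ((hu.differentiable one_ne_zero) (x + t * h)).hasDerivAt.scomp t
      (by simpa using ((hasDerivAt_id t).mul_const h).const_add x)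
  have := hu.continuous_deriv le_rfl
  have hftc := intervalIntegral.integral_eq_sub_of_hasDerivAt (fun t _ => hderiv t)
    (Continuous.intervalIntegrable (by fun_prop) 0 1)
  rw [integral_I01_eq_intervalIntegral, ← intervalIntegral.integral_smul, hftc]
  simp

lemma norm_taylor_remainder_sq_le {u : ℝ → E} (hu : ContDiff ℝ 1 u) (x h : ℝ) :
    ‖u (x + h) - u x - h • deriv u x‖ ^ 2 ≤ h ^ 2 * avgOsc (deriv u) x h := by
  have hcont : Continuous (deriv u) := hu.continuous_deriv le_rfl
  have hrem : u (x + h) - u x - h • deriv u x =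
      h • ∫ t in I01, (deriv u (x + t * h) - deriv u x) := by
    rw [integral_sub (integrable_I01_of_continuous (by fun_prop)) (integrable_const _),
      add_sub_eq_smul_integral_deriv hu, smul_sub]
    simp
  rw [hrem, norm_smul, mul_pow, Real.norm_eq_abs, sq_abs]
  gcongr
  rw [← ENNReal.ofReal_le_ofReal_iff (avgOsc_nonneg _ _ _), ofReal_avgOsc hcont,
    ← enorm_sq_eq_ofReal]
  simp_rw [← enorm_sq_eq_ofReal]
  exact enorm_integral_sq_le (Continuous.aestronglyMeasurable (by fun_prop))

end Taylor

section BilipschitzCurve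

variable {E : Type*} [NormedAddCommGroup E] [NormedSpace ℝ E] {γ : ℝ → E} {m L : ℝ}

/-- A closed `C¹` curve whose speed lies between `m > 0` and `L` and whose chords satisfy
`m * dT x y ≤ ‖γ y - γ x‖`, written with increments `|h| ≤ 1 / 2`. The upper chord bound follows
from the bound on the speed. -/
structure IsBilipschitzCurve (m L : ℝ) (γ : ℝ → E) : Prop where
  pos : 0 < m
  periodic : Function.Periodic γ 1
  contDiff : ContDiff ℝ 1 γ
  le_norm_deriv : ∀ x, m ≤ ‖deriv γ x‖
  norm_deriv_le : ∀ x, ‖deriv γ x‖ ≤ L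
  mul_abs_le_norm_sub : ∀ x h, |h| ≤ 1 / 2 → m * |h| ≤ ‖γ (x + h) - γ x‖

namespace IsBilipschitzCurve

lemma pos' (hγ : IsBilipschitzCurve m L γ) : 0 < L :=
  hγ.pos.trans_le ((hγ.le_norm_deriv 0).trans (hγ.norm_deriv_le 0))

lemma norm_sub_le (hγ : IsBilipschitzCurve m L γ) (x h : ℝ) : ‖γ (x + h) - γ x‖ ≤ L * |h| :=
  norm_add_sub_le_of_norm_deriv_le (hγ.contDiff.differentiable one_ne_zero) hγ.norm_deriv_le x h

lemma continuous (hγ : IsBilipschitzCurve m L γ) : Continuous γ := hγ.contDiff.continuous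

lemma continuous_deriv (hγ : IsBilipschitzCurve m L γ) : Continuous (deriv γ) :=
  hγ.contDiff.continuous_deriv le_rfl

end IsBilipschitzCurve

lemma sub_eq_intCast_of_injOn_I01 {α : Type*} {f : ℝ → α} (hf : Function.Periodic f 1)
    (hinj : InjOn f I01) {x y : ℝ} (hxy : f y = f x) : ∃ k : ℤ, y - x = k := by
  have hfract (z : ℝ) : Int.fract z ∈ I01 := ⟨Int.fract_nonneg z, Int.fract_lt_one z⟩
  have hf_fract (z : ℝ) : f (Int.fract z) = f z := by
    simpa only [mul_one, Int.self_sub_floor] using hf.sub_int_mul_eq (x := z) ⌊z⌋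
  exact Int.fract_eq_fract.1 (hinj (hfract y) (hfract x) (by rw [hf_fract, hf_fract, hxy]))

variable [CompleteSpace E]

lemma integral_deriv_ne_zero_of_injOn_I01 (hper : Function.Periodic γ 1) (hγ : ContDiff ℝ 1 γ)
    (hinj : InjOn γ I01) (himm : ∀ x, deriv γ x ≠ 0) (x : ℝ) {h : ℝ} (hh : |h| ≤ 1 / 2) :
    ∫ t in I01, deriv γ (x + t * h) ≠ 0 := by
  intro hzero
  have hγxh : γ (x + h) = γ x := by
    rw [← sub_eq_zero, add_sub_eq_smul_integral_deriv hγ, hzero, smul_zero]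
  obtain ⟨k, hk⟩ := sub_eq_intCast_of_injOn_I01 hper hinj hγxh
  rw [add_sub_cancel_left] at hk
  have hk1 : |k| < 1 := by
    have : |(k : ℝ)| < 1 := by linarith [hk ▸ hh]
    exact_mod_cast this
  rw [Int.abs_lt_one_iff.1 hk1, Int.cast_zero] at hk
  exact himm x (by simpa [hk] using hzero)

lemma exists_isBilipschitzCurve (hper : Function.Periodic γ 1) (hγ : ContDiff ℝ 1 γ)
    (hinj : InjOn γ I01) (himm : ∀ x, deriv γ x ≠ 0) : ∃ m L, IsBilipschitzCurve m L γ := by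
  have hcont : Continuous (deriv γ) := hγ.continuous_deriv le_rfl
  obtain ⟨L, hL⟩ := exists_norm_le_of_periodic_of_continuous (periodic_deriv hper) hcont
  set q : ℝ → ℝ → E := fun x h => ∫ t in I01, deriv γ (x + t * h) with hq
  have hqper (h : ℝ) : Function.Periodic (q · h) 1 := fun x => by
    simp only [hq, add_right_comm x 1, periodic_deriv hper _]
  have hqcont : Continuous fun z : ℝ × ℝ => ‖q z.1 z.2‖ :=
    (continuous_integral_I01 (by fun_prop)).norm
  obtain ⟨z, hz, hmin⟩ := (isCompact_Icc.prod isCompact_Icc).exists_isMinOn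
    (s := Icc (0 : ℝ) 1 ×ˢ Icc (-(1 / 2) : ℝ) (1 / 2)) ⟨(0, 0), by norm_num⟩ hqcont.continuousOn
  have hle (x h : ℝ) (hh : |h| ≤ 1 / 2) : ‖q z.1 z.2‖ ≤ ‖q x h‖ := by
    obtain ⟨y, hy, hxy⟩ := (hqper h).exists_mem_Ico₀ one_pos x
    rw [show q x h = q y h from hxy]
    exact hmin (a := (y, h)) ⟨Ico_subset_Icc_self hy, abs_le.1 hh⟩
  refine ⟨‖q z.1 z.2‖, L, norm_pos_iff.2 ?_, hper, hγ, fun x => ?_, hL, fun x h hh => ?_⟩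
  · exact integral_deriv_ne_zero_of_injOn_I01 hper hγ hinj himm _ (abs_le.2 hz.2)
  · simpa [hq] using hle x 0 (by norm_num)
  · rw [add_sub_eq_smul_integral_deriv hγ, norm_smul, Real.norm_eq_abs, mul_comm]
    gcongr
    exact hle x h hh

end BilipschitzCurve

section TangentRemainder

lemma norm_smul_sq {E : Type*} [NormedAddCommGroup E] [NormedSpace ℝ E] (c : ℝ) (v : E) :
    ‖c • v‖ ^ 2 = c ^ 2 * ‖v‖ ^ 2 := by
  rw [norm_smul, mul_pow, Real.norm_eq_abs, sq_abs]

lemma sq_inv_normSq_mul_inner_sub_le {F : Type*} [NormedAddCommGroup F] [InnerProductSpace ℝ F]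
    {g : F} {m : ℝ} (hm : 0 < m) (hg : m ≤ ‖g‖) (D : F) (h : ℝ) :
    ((‖g‖ ^ 2)⁻¹ * ⟪g, D⟫ - h) ^ 2 ≤ ‖D - h • g‖ ^ 2 / m ^ 2 := by
  have hg0 : 0 < ‖g‖ := hm.trans_le hg
  have hproj : (‖g‖ ^ 2)⁻¹ * ⟪g, D⟫ - h = (‖g‖ ^ 2)⁻¹ * ⟪g, D - h • g⟫ := by
    rw [inner_sub_right, inner_smul_right, real_inner_self_eq_norm_sq]
    field_simp
  calc ((‖g‖ ^ 2)⁻¹ * ⟪g, D⟫ - h) ^ 2 = ((‖g‖ ^ 2)⁻¹) ^ 2 * |⟪g, D - h • g⟫| ^ 2 := by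
        rw [hproj, mul_pow, sq_abs]
    _ ≤ ((‖g‖ ^ 2)⁻¹) ^ 2 * (‖g‖ * ‖D - h • g‖) ^ 2 := by
        gcongr
        exact abs_real_inner_le_norm _ _
    _ = ‖D - h • g‖ ^ 2 / ‖g‖ ^ 2 := by field_simp
    _ ≤ ‖D - h • g‖ ^ 2 / m ^ 2 := by gcongr

variable {n : ℕ} {γ u : ℝ → En n} {m L S : ℝ}

/-- The numerator `u(y) - u(x) - 𝒟_γ u(x)(γ(y) - γ(x))` of the operator `R^s_γ`. -/
def tangentRemainder (γ u : ℝ → En n) (x y : ℝ) : En n := u y - u x - DDg γ u x (γ y - γ x)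

lemma tangentRemainder_self (γ u : ℝ → En n) (x : ℝ) : tangentRemainder γ u x x = 0 := by
  simp [tangentRemainder, DDg]

lemma norm_DDg_sub_smul_deriv_sq_le (hγ : IsBilipschitzCurve m L γ) (hS : ∀ x, ‖deriv u x‖ ≤ S)
    (x : ℝ) (D : En n) (h : ℝ) :
    ‖DDg γ u x D - h • deriv u x‖ ^ 2 ≤ S ^ 2 / m ^ 2 * ‖D - h • deriv γ x‖ ^ 2 := by
  rw [DDg, ← sub_smul, norm_smul_sq]
  calc _ ≤ ‖D - h • deriv γ x‖ ^ 2 / m ^ 2 * S ^ 2 := by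
        gcongr
        · exact sq_inv_normSq_mul_inner_sub_le hγ.pos (hγ.le_norm_deriv x) D h
        · exact hS x
    _ = _ := by ring

lemma norm_tangentRemainder_sq_le (hγ : IsBilipschitzCurve m L γ) (hu : ContDiff ℝ 1 u)
    (hS : ∀ x, ‖deriv u x‖ ≤ S) (x h : ℝ) :
    ‖tangentRemainder γ u x (x + h)‖ ^ 2 ≤
      h ^ 2 * (2 * (avgOsc (deriv u) x h + S ^ 2 / m ^ 2 * avgOsc (deriv γ) x h)) := by
  have hsplit : tangentRemainder γ u x (x + h) = (u (x + h) - u x - h • deriv u x) -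
      (DDg γ u x (γ (x + h) - γ x) - h • deriv u x) := by
    rw [tangentRemainder]
    abel
  calc _ ≤ 2 * (‖u (x + h) - u x - h • deriv u x‖ ^ 2 +
          ‖DDg γ u x (γ (x + h) - γ x) - h • deriv u x‖ ^ 2) :=
        hsplit ▸ norm_sub_sq_le_two_mul _ _
    _ ≤ 2 * (h ^ 2 * avgOsc (deriv u) x h +
          S ^ 2 / m ^ 2 * (h ^ 2 * avgOsc (deriv γ) x h)) := by
        gcongr
        · exact norm_taylor_remainder_sq_le hu x h
        · refine (norm_DDg_sub_smul_deriv_sq_le hγ hS x _ h).trans ?_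
          gcongr
          exact norm_taylor_remainder_sq_le hγ.contDiff x h
    _ = _ := by ring

lemma norm_sub_smul_deriv_right_sq_le {E : Type*} [NormedAddCommGroup E] [NormedSpace ℝ E]
    [CompleteSpace E] {u : ℝ → E} (hu : ContDiff ℝ 1 u) (x h : ℝ) :
    ‖u (x + h) - u x - h • deriv u (x + h)‖ ^ 2 ≤
      h ^ 2 * (2 * (avgOsc (deriv u) x h + ‖deriv u (x + h) - deriv u x‖ ^ 2)) := by
  have hsplit : u (x + h) - u x - h • deriv u (x + h) =
      (u (x + h) - u x - h • deriv u x) - h • (deriv u (x + h) - deriv u x) := by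
    rw [smul_sub]
    abel
  calc _ ≤ 2 * (‖u (x + h) - u x - h • deriv u x‖ ^ 2 +
          ‖h • (deriv u (x + h) - deriv u x)‖ ^ 2) := hsplit ▸ norm_sub_sq_le_two_mul _ _
    _ ≤ 2 * (h ^ 2 * avgOsc (deriv u) x h + h ^ 2 * ‖deriv u (x + h) - deriv u x‖ ^ 2) := by
        rw [norm_smul_sq]
        gcongr
        exact norm_taylor_remainder_sq_le hu x h
    _ = _ := by ring

/-- Adding the two remainders cancels `u` and leaves `h • (u' (x + h) - u' x)` up to errors that
only involve the sup norm of `u'` and the oscillation of `γ'`. -/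
lemma sq_mul_norm_deriv_sub_sq_le (hγ : IsBilipschitzCurve m L γ) (hS : ∀ x, ‖deriv u x‖ ≤ S)
    (x h : ℝ) :
    h ^ 2 * ‖deriv u (x + h) - deriv u x‖ ^ 2 ≤
      4 * (‖tangentRemainder γ u x (x + h)‖ ^ 2 + ‖tangentRemainder γ u (x + h) x‖ ^ 2 +
        S ^ 2 / m ^ 2 * (h ^ 2 *
          (3 * avgOsc (deriv γ) x h + 2 * ‖deriv γ (x + h) - deriv γ x‖ ^ 2))) := by
  set D := γ (x + h) - γ x with hD
  set p := tangentRemainder γ u x (x + h) with hp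
  set q := tangentRemainder γ u (x + h) x with hq
  set a := DDg γ u x D - h • deriv u x with ha
  set b := DDg γ u (x + h) D - h • deriv u (x + h) with hb
  have hsplit : h • (deriv u (x + h) - deriv u x) = (p + q) + (a - b) := by
    have hneg : DDg γ u (x + h) (γ x - γ (x + h)) = -DDg γ u (x + h) D := by
      rw [hD, ← neg_sub, DDg, DDg, inner_neg_right, mul_neg, neg_smul]
    rw [hp, hq, ha, hb, tangentRemainder, tangentRemainder, hneg, smul_sub]
    abel
  have ha_le : ‖a‖ ^ 2 ≤ S ^ 2 / m ^ 2 * (h ^ 2 * avgOsc (deriv γ) x h) := by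
    refine (norm_DDg_sub_smul_deriv_sq_le hγ hS x D h).trans ?_
    gcongr
    exact norm_taylor_remainder_sq_le hγ.contDiff x h
  have hb_le : ‖b‖ ^ 2 ≤ S ^ 2 / m ^ 2 * (h ^ 2 *
      (2 * (avgOsc (deriv γ) x h + ‖deriv γ (x + h) - deriv γ x‖ ^ 2))) := by
    refine (norm_DDg_sub_smul_deriv_sq_le hγ hS (x + h) D h).trans ?_
    gcongr
    exact norm_sub_smul_deriv_right_sq_le hγ.contDiff x h
  calc h ^ 2 * ‖deriv u (x + h) - deriv u x‖ ^ 2 = ‖(p + q) + (a - b)‖ ^ 2 := by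
        rw [← hsplit, norm_smul_sq]
    _ ≤ 2 * (2 * (‖p‖ ^ 2 + ‖q‖ ^ 2) + 2 * (‖a‖ ^ 2 + ‖b‖ ^ 2)) := by
        refine (norm_add_sq_le_two_mul _ _).trans ?_
        gcongr
        · exact norm_add_sq_le_two_mul _ _
        · exact norm_sub_sq_le_two_mul _ _
    _ ≤ _ := by linarith

end TangentRemainder

section RopDensity

variable {n : ℕ} {γ u : ℝ → En n} {m L S s : ℝ}

/-- The integrand of `B¹_γ(u, u)` with respect to `λ ⊗ λ`. -/
def ropDensity (s : ℝ) (γ u : ℝ → En n) (x y : ℝ) : ℝ := ‖Rop s γ u x y‖ ^ 2 * muW γ x y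

lemma muW_nonneg (γ : ℝ → En n) (x y : ℝ) : 0 ≤ muW γ x y := by
  unfold muW
  positivity

lemma ropDensity_nonneg (s : ℝ) (γ u : ℝ → En n) (x y : ℝ) : 0 ≤ ropDensity s γ u x y :=
  mul_nonneg (sq_nonneg _) (muW_nonneg γ x y)

lemma ropDensity_self (s : ℝ) (γ u : ℝ → En n) (x : ℝ) : ropDensity s γ u x x = 0 := by
  simp [ropDensity, muW]

lemma ropDensity_eq (s : ℝ) (u : ℝ → En n) {x y : ℝ} (hxy : 0 < ‖γ y - γ x‖) :
    ropDensity s γ u x y = ‖tangentRemainder γ u x y‖ ^ 2 * (‖deriv γ x‖ * ‖deriv γ y‖) /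
      ‖γ y - γ x‖ ^ (2 * s + 1) := by
  have hpow : ‖γ y - γ x‖ ^ (2 * s + 1) = (‖γ y - γ x‖ ^ s) ^ 2 * ‖γ y - γ x‖ := by
    rw [Real.rpow_add_one hxy.ne', mul_comm 2 s, Real.rpow_mul hxy.le]
    norm_cast
  have := Real.rpow_pos_of_pos hxy s
  rw [hpow, ropDensity, muW, Rop, norm_smul_sq, tangentRemainder]
  field_simp

lemma sq_mul_div_abs_rpow (hs : s ≠ 1 / 2) (h a : ℝ) :
    h ^ 2 * a / |h| ^ (2 * s + 1) = a / |h| ^ (2 * (s - 1) + 1) := by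
  rcases eq_or_ne h 0 with rfl | h0
  · have hexp : 2 * (s - 1) + 1 ≠ 0 := fun H => hs (by linarith)
    simp [Real.zero_rpow hexp]
  · have hpow : |h| ^ (2 * s + 1) = h ^ 2 * |h| ^ (2 * (s - 1) + 1) := by
      rw [← sq_abs h, ← Real.rpow_natCast, ← Real.rpow_add (abs_pos.2 h0)]
      congr 1
      push_cast
      ring
    rw [hpow, mul_div_mul_left _ _ (pow_ne_zero 2 h0)]

lemma ropDensity_le_tangentRemainder (hγ : IsBilipschitzCurve m L γ) (hs : 0 ≤ 2 * s + 1)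
    (u : ℝ → En n) (x : ℝ) {h : ℝ} (hh : |h| ≤ 1 / 2) :
    ropDensity s γ u x (x + h) ≤ L ^ 2 / m ^ (2 * s + 1) *
      (‖tangentRemainder γ u x (x + h)‖ ^ 2 / |h| ^ (2 * s + 1)) := by
  have hm := hγ.pos
  rcases eq_or_ne h 0 with rfl | h0
  · simp [ropDensity_self, tangentRemainder_self]
  have hchord := hγ.mul_abs_le_norm_sub x h hh
  have hmh : 0 < m * |h| := by positivity
  calc ropDensity s γ u x (x + h)
      = ‖tangentRemainder γ u x (x + h)‖ ^ 2 * (‖deriv γ x‖ * ‖deriv γ (x + h)‖) /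
          ‖γ (x + h) - γ x‖ ^ (2 * s + 1) := ropDensity_eq s u (hmh.trans_le hchord)
    _ ≤ ‖tangentRemainder γ u x (x + h)‖ ^ 2 * (L * L) / (m * |h|) ^ (2 * s + 1) := by
        have hL := hγ.pos'
        gcongr
        · exact hγ.norm_deriv_le _
        · exact hγ.norm_deriv_le _
    _ = _ := by
        rw [Real.mul_rpow hm.le (abs_nonneg h)]
        ring

lemma tangentRemainder_le_ropDensity (hγ : IsBilipschitzCurve m L γ) (hs : 0 ≤ 2 * s + 1)
    (u : ℝ → En n) (x : ℝ) {h : ℝ} (hh : |h| ≤ 1 / 2) :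
    ‖tangentRemainder γ u x (x + h)‖ ^ 2 / |h| ^ (2 * s + 1) ≤
      L ^ (2 * s + 1) / m ^ 2 * ropDensity s γ u x (x + h) := by
  have hm := hγ.pos
  have hL := hγ.pos'
  rcases eq_or_ne h 0 with rfl | h0
  · simp [ropDensity_self, tangentRemainder_self]
  have hchord : 0 < ‖γ (x + h) - γ x‖ :=
    (mul_pos hm (abs_pos.2 h0)).trans_le (hγ.mul_abs_le_norm_sub x h hh)
  calc ‖tangentRemainder γ u x (x + h)‖ ^ 2 / |h| ^ (2 * s + 1)
      = L ^ (2 * s + 1) / m ^ 2 *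
          (‖tangentRemainder γ u x (x + h)‖ ^ 2 * (m * m) / (L * |h|) ^ (2 * s + 1)) := by
        have := Real.rpow_pos_of_pos hL (2 * s + 1)
        rw [Real.mul_rpow hL.le (abs_nonneg h)]
        field_simp
    _ ≤ L ^ (2 * s + 1) / m ^ 2 * (‖tangentRemainder γ u x (x + h)‖ ^ 2 *
          (‖deriv γ x‖ * ‖deriv γ (x + h)‖) / ‖γ (x + h) - γ x‖ ^ (2 * s + 1)) := by
        gcongr
        · exact hγ.le_norm_deriv _
        · exact hγ.le_norm_deriv _
        · exact hγ.norm_sub_le x h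
    _ = _ := by rw [ropDensity_eq s u hchord]

lemma ropDensity_le_avgOsc (hγ : IsBilipschitzCurve m L γ) (hu : ContDiff ℝ 1 u)
    (hS : ∀ x, ‖deriv u x‖ ≤ S) (hs : 1 / 2 < s) (x : ℝ) {h : ℝ} (hh : |h| ≤ 1 / 2) :
    ropDensity s γ u x (x + h) ≤
      2 * L ^ 2 / m ^ (2 * s + 1) * (avgOsc (deriv u) x h / |h| ^ (2 * (s - 1) + 1)) +
      2 * L ^ 2 / m ^ (2 * s + 1) * (S ^ 2 / m ^ 2) *
        (avgOsc (deriv γ) x h / |h| ^ (2 * (s - 1) + 1)) := by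
  have hm := hγ.pos
  calc ropDensity s γ u x (x + h) ≤ L ^ 2 / m ^ (2 * s + 1) *
        (h ^ 2 * (2 * (avgOsc (deriv u) x h + S ^ 2 / m ^ 2 * avgOsc (deriv γ) x h)) /
          |h| ^ (2 * s + 1)) := by
        refine (ropDensity_le_tangentRemainder hγ (by linarith) u x hh).trans ?_
        gcongr
        exact norm_tangentRemainder_sq_le hγ hu hS x h
    _ = _ := by
        rw [sq_mul_div_abs_rpow hs.ne']
        ring

lemma norm_deriv_sub_sq_div_le_ropDensity (hγ : IsBilipschitzCurve m L γ)
    (hS : ∀ x, ‖deriv u x‖ ≤ S) (hs : 1 / 2 < s) (x : ℝ) {h : ℝ} (hh : |h| ≤ 1 / 2) :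
    ‖deriv u (x + h) - deriv u x‖ ^ 2 / |h| ^ (2 * (s - 1) + 1) ≤
      4 * (L ^ (2 * s + 1) / m ^ 2) * ropDensity s γ u x (x + h) +
      4 * (L ^ (2 * s + 1) / m ^ 2) * ropDensity s γ u (x + h) x +
      12 * (S ^ 2 / m ^ 2) * (avgOsc (deriv γ) x h / |h| ^ (2 * (s - 1) + 1)) +
      8 * (S ^ 2 / m ^ 2) *
        (‖deriv γ (x + h) - deriv γ x‖ ^ 2 / |h| ^ (2 * (s - 1) + 1)) := by
  have hforward := tangentRemainder_le_ropDensity (s := s) hγ (by linarith) u x hh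
  have hbackward := tangentRemainder_le_ropDensity (s := s) hγ (by linarith) u (x + h)
    (h := -h) (by rwa [abs_neg])
  rw [add_neg_cancel_right, abs_neg] at hbackward
  have herror := sq_mul_div_abs_rpow hs.ne' h
    (3 * avgOsc (deriv γ) x h + 2 * ‖deriv γ (x + h) - deriv γ x‖ ^ 2)
  calc _ = h ^ 2 * ‖deriv u (x + h) - deriv u x‖ ^ 2 / |h| ^ (2 * s + 1) :=
        (sq_mul_div_abs_rpow hs.ne' h _).symm
    _ ≤ 4 * (‖tangentRemainder γ u x (x + h)‖ ^ 2 + ‖tangentRemainder γ u (x + h) x‖ ^ 2 +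
          S ^ 2 / m ^ 2 * (h ^ 2 *
            (3 * avgOsc (deriv γ) x h + 2 * ‖deriv γ (x + h) - deriv γ x‖ ^ 2))) /
          |h| ^ (2 * s + 1) := by
        exact div_le_div_of_nonneg_right (sq_mul_norm_deriv_sub_sq_le hγ hS x h) (by positivity)
    _ = 4 * (‖tangentRemainder γ u x (x + h)‖ ^ 2 / |h| ^ (2 * s + 1)) +
        4 * (‖tangentRemainder γ u (x + h) x‖ ^ 2 / |h| ^ (2 * s + 1)) +
        4 * (S ^ 2 / m ^ 2) * ((3 * avgOsc (deriv γ) x h +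
          2 * ‖deriv γ (x + h) - deriv γ x‖ ^ 2) / |h| ^ (2 * (s - 1) + 1)) := by
        rw [← herror]
        ring
    _ ≤ 4 * (L ^ (2 * s + 1) / m ^ 2 * ropDensity s γ u x (x + h)) +
        4 * (L ^ (2 * s + 1) / m ^ 2 * ropDensity s γ u (x + h) x) +
        4 * (S ^ 2 / m ^ 2) * ((3 * avgOsc (deriv γ) x h +
          2 * ‖deriv γ (x + h) - deriv γ x‖ ^ 2) / |h| ^ (2 * (s - 1) + 1)) := by gcongr
    _ = _ := by ring

end RopDensity

section FirstForm

variable {n : ℕ} {γ u : ℝ → En n} {m L S s : ℝ}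

lemma measurable_Rop (s : ℝ) (hγ : Continuous γ) (hu : Continuous u) :
    Measurable fun z : ℝ × ℝ => Rop s γ u z.1 z.2 := by
  unfold Rop DDg
  fun_prop

lemma measurable_muW (hγ : Continuous γ) : Measurable fun z : ℝ × ℝ => muW γ z.1 z.2 := by
  unfold muW
  fun_prop

lemma measurable_ropDensity (s : ℝ) (hγ : Continuous γ) (hu : Continuous u) :
    Measurable fun z : ℝ × ℝ => ropDensity s γ u z.1 z.2 :=
  ((measurable_Rop s hγ hu).norm.pow_const 2).mul (measurable_muW hγ)

lemma ropDensity_add_one_left (s : ℝ) (hγ : Function.Periodic γ 1) (hu : Function.Periodic u 1)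
    (x y : ℝ) : ropDensity s γ u (x + 1) y = ropDensity s γ u x y := by
  simp only [ropDensity, Rop, muW, DDg, hγ x, hu x, periodic_deriv hγ x, periodic_deriv hu x]

lemma ropDensity_add_one_right (s : ℝ) (hγ : Function.Periodic γ 1) (hu : Function.Periodic u 1)
    (x y : ℝ) : ropDensity s γ u x (y + 1) = ropDensity s γ u x y := by
  simp only [ropDensity, Rop, muW, DDg, hγ y, hu y, periodic_deriv hγ y]

/-- The quadratic form `B¹_γ(u, u)`, valued in `[0,∞]`. -/
def B1E (s : ℝ) (γ u : ℝ → En n) : ℝ≥0∞ :=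
  ∫⁻ x in I01, ∫⁻ y in I01, ENNReal.ofReal (ropDensity s γ u x y)

lemma B1E_eq_lintegral_translate_right (s : ℝ) (hγ : Function.Periodic γ 1)
    (hu : Function.Periodic u 1) :
    B1E s γ u = ∫⁻ x in I01, ∫⁻ h in symmDomain, ENNReal.ofReal (ropDensity s γ u x (x + h)) :=
  lintegral_congr fun x => lintegral_I01_eq_lintegral_symmDomain
    (fun y => by rw [ropDensity_add_one_right s hγ hu]) x

lemma B1E_eq_lintegral_translate_left (s : ℝ) (hγ : Function.Periodic γ 1)
    (hu : Function.Periodic u 1) (hγc : Continuous γ) (huc : Continuous u) :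
    B1E s γ u = ∫⁻ x in I01, ∫⁻ h in symmDomain, ENNReal.ofReal (ropDensity s γ u (x + h) x) :=
  (lintegral_lintegral_swap (measurable_ropDensity s hγc huc).ennreal_ofReal.aemeasurable).trans
    (lintegral_congr fun x => lintegral_I01_eq_lintegral_symmDomain
      (fun y => by rw [ropDensity_add_one_left s hγ hu]) x)

lemma lintegral_lintegral_ofReal_add_le {α β : Type*} [MeasurableSpace α] [MeasurableSpace β]
    {μ : Measure α} {ν : Measure β} [SFinite ν] (f : α → β → ℝ) {g : α → β → ℝ}
    (hg : Measurable fun z : α × β => g z.1 z.2) :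
    ∫⁻ a, ∫⁻ b, ENNReal.ofReal (f a b + g a b) ∂ν ∂μ ≤
      (∫⁻ a, ∫⁻ b, ENNReal.ofReal (f a b) ∂ν ∂μ) + ∫⁻ a, ∫⁻ b, ENNReal.ofReal (g a b) ∂ν ∂μ := by
  have hg' := hg.ennreal_ofReal
  calc _ ≤ ∫⁻ a, ∫⁻ b, (ENNReal.ofReal (f a b) + ENNReal.ofReal (g a b)) ∂ν ∂μ :=
        lintegral_mono fun a => lintegral_mono fun b => ENNReal.ofReal_add_le
    _ = ∫⁻ a, (∫⁻ b, ENNReal.ofReal (f a b) ∂ν + ∫⁻ b, ENNReal.ofReal (g a b) ∂ν) ∂μ :=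
        lintegral_congr fun a => lintegral_add_right _ (hg'.comp measurable_prodMk_left)
    _ = _ := lintegral_add_right _ hg'.lintegral_prod_right'

lemma lintegral_lintegral_ofReal_const_mul {α β : Type*} [MeasurableSpace α] [MeasurableSpace β]
    {μ : Measure α} {ν : Measure β} {c : ℝ} (hc : 0 ≤ c) (f : α → β → ℝ) :
    ∫⁻ a, ∫⁻ b, ENNReal.ofReal (c * f a b) ∂ν ∂μ =
      ENNReal.ofReal c * ∫⁻ a, ∫⁻ b, ENNReal.ofReal (f a b) ∂ν ∂μ := by
  simp_rw [ENNReal.ofReal_mul hc, lintegral_const_mul' _ _ ENNReal.ofReal_ne_top]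

lemma measurable_avgOsc_div_rpow {E : Type*} [NormedAddCommGroup E] {f : ℝ → E}
    (hf : Continuous f) (p : ℝ) : Measurable fun z : ℝ × ℝ => avgOsc f z.1 z.2 / |z.2| ^ p :=
  (continuous_avgOsc hf).measurable.div (measurable_snd.abs.pow_const p)

lemma B1E_le (hγ : IsBilipschitzCurve m L γ) (hup : Function.Periodic u 1)
    (hu : ContDiff ℝ 1 u) (hS : ∀ x, ‖deriv u x‖ ≤ S) (hs : 1 ≤ s) :
    B1E s γ u ≤
      ENNReal.ofReal (2 * L ^ 2 / m ^ (2 * s + 1)) * gagliardoSqE (s - 1) (deriv u) +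
      ENNReal.ofReal (2 * L ^ 2 / m ^ (2 * s + 1) * (S ^ 2 / m ^ 2)) *
        gagliardoSqE (s - 1) (deriv γ) := by
  have hm := hγ.pos
  set K := 2 * L ^ 2 / m ^ (2 * s + 1)
  have hK : 0 ≤ K := by positivity
  have hu'c : Continuous (deriv u) := hu.continuous_deriv le_rfl
  have hγ'c := hγ.continuous_deriv
  calc B1E s γ u ≤ ∫⁻ x in I01, ∫⁻ h in symmDomain, ENNReal.ofReal
        (K * (avgOsc (deriv u) x h / |h| ^ (2 * (s - 1) + 1)) +
          K * (S ^ 2 / m ^ 2) * (avgOsc (deriv γ) x h / |h| ^ (2 * (s - 1) + 1))) := by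
        rw [B1E_eq_lintegral_translate_right s hγ.periodic hup]
        refine lintegral_mono fun x => setLIntegral_mono' measurableSet_symmDomain fun h hh =>
          ENNReal.ofReal_le_ofReal ?_
        exact ropDensity_le_avgOsc hγ hu hS (by linarith) x (abs_le_of_mem_symmDomain hh)
    _ ≤ _ := by
        refine (lintegral_lintegral_ofReal_add_le _
          ((measurable_avgOsc_div_rpow hγ'c _).const_mul _)).trans ?_
        rw [lintegral_lintegral_ofReal_const_mul hK,
          lintegral_lintegral_ofReal_const_mul (by positivity)]
        gcongr
        · exact lintegral_avgOsc_le_gagliardoSqE (by linarith) (periodic_deriv hup) hu'c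
        · exact lintegral_avgOsc_le_gagliardoSqE (by linarith) (periodic_deriv hγ.periodic) hγ'c

lemma gagliardoSqE_deriv_le_lintegral_translate (hγ : IsBilipschitzCurve m L γ)
    (hup : Function.Periodic u 1) (hu : Continuous u) (hS : ∀ x, ‖deriv u x‖ ≤ S) (hs : 1 / 2 < s) :
    gagliardoSqE (s - 1) (deriv u) ≤
      (∫⁻ x in I01, ∫⁻ h in symmDomain, ENNReal.ofReal
        (4 * (L ^ (2 * s + 1) / m ^ 2) * ropDensity s γ u x (x + h))) +
      (∫⁻ x in I01, ∫⁻ h in symmDomain, ENNReal.ofReal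
        (4 * (L ^ (2 * s + 1) / m ^ 2) * ropDensity s γ u (x + h) x)) +
      (∫⁻ x in I01, ∫⁻ h in symmDomain, ENNReal.ofReal
        (12 * (S ^ 2 / m ^ 2) * (avgOsc (deriv γ) x h / |h| ^ (2 * (s - 1) + 1)))) +
      ∫⁻ x in I01, ∫⁻ h in symmDomain, ENNReal.ofReal
        (8 * (S ^ 2 / m ^ 2) *
          (‖deriv γ (x + h) - deriv γ x‖ ^ 2 / |h| ^ (2 * (s - 1) + 1))) := by
  have hγ'c := hγ.continuous_deriv
  have hback := (measurable_ropDensity s hγ.continuous hu).comp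
    (by fun_prop : Measurable fun z : ℝ × ℝ => (z.1 + z.2, z.1))
  rw [gagliardoSqE_eq_lintegral_translate _ (periodic_deriv hup)]
  refine (lintegral_mono fun x => setLIntegral_mono' measurableSet_symmDomain fun h hh =>
    ENNReal.ofReal_le_ofReal <| norm_deriv_sub_sq_div_le_ropDensity hγ hS hs x <|
      abs_le_of_mem_symmDomain hh).trans ?_
  refine (lintegral_lintegral_ofReal_add_le _ (by fun_prop)).trans ?_
  gcongr
  refine (lintegral_lintegral_ofReal_add_le _
    ((measurable_avgOsc_div_rpow hγ'c _).const_mul _)).trans ?_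
  gcongr
  exact lintegral_lintegral_ofReal_add_le _ (Measurable.const_mul hback _)

lemma gagliardoSqE_deriv_le (hγ : IsBilipschitzCurve m L γ) (hup : Function.Periodic u 1)
    (hu : Continuous u) (hS : ∀ x, ‖deriv u x‖ ≤ S) (hs : 1 ≤ s) :
    gagliardoSqE (s - 1) (deriv u) ≤
      ENNReal.ofReal (8 * (L ^ (2 * s + 1) / m ^ 2)) * B1E s γ u +
      ENNReal.ofReal (20 * (S ^ 2 / m ^ 2)) * gagliardoSqE (s - 1) (deriv γ) := by
  have := hγ.pos'
  have hA := lintegral_avgOsc_le_gagliardoSqE (sub_nonneg.2 hs) (periodic_deriv hγ.periodic)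
    hγ.continuous_deriv
  refine (gagliardoSqE_deriv_le_lintegral_translate hγ hup hu hS (by linarith)).trans ?_
  set K := L ^ (2 * s + 1) / m ^ 2
  set κ := S ^ 2 / m ^ 2
  have hK : 0 ≤ 4 * K := by positivity
  have h12 : 0 ≤ 12 * κ := by positivity
  have h8 : 0 ≤ 8 * κ := by positivity
  simp_rw [lintegral_lintegral_ofReal_const_mul hK, lintegral_lintegral_ofReal_const_mul h12,
    lintegral_lintegral_ofReal_const_mul h8]
  rw [← B1E_eq_lintegral_translate_right s hγ.periodic hup,
    ← B1E_eq_lintegral_translate_left s hγ.periodic hup hγ.continuous hu,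
    ← gagliardoSqE_eq_lintegral_translate _ (periodic_deriv hγ.periodic),
    show 8 * K = 4 * K + 4 * K by ring, show 20 * κ = 12 * κ + 8 * κ by ring,
    ENNReal.ofReal_add hK hK, ENNReal.ofReal_add h12 h8, add_mul, add_mul, ← add_assoc]
  gcongr

end FirstForm

section SobolevSpace

lemma gagliardoSqE_add_le {E : Type*} [NormedAddCommGroup E] (σ : ℝ) (f : ℝ → E) {g : ℝ → E}
    (hg : Continuous g) :
    gagliardoSqE σ (fun x => f x + g x) ≤
      ENNReal.ofReal 2 * gagliardoSqE σ f + ENNReal.ofReal 2 * gagliardoSqE σ g := by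
  have hmeas : Measurable fun z : ℝ × ℝ =>
      2 * (‖g z.2 - g z.1‖ ^ 2 / dT z.1 z.2 ^ (2 * σ + 1)) := by
    have := continuous_dT.measurable
    have hnum : Continuous fun z : ℝ × ℝ => ‖g z.2 - g z.1‖ ^ 2 := by fun_prop
    exact (hnum.measurable.div (by fun_prop)).const_mul 2
  unfold gagliardoSqE
  simp only [← lintegral_lintegral_ofReal_const_mul zero_le_two]
  refine le_trans ?_ (lintegral_lintegral_ofReal_add_le _ hmeas)
  refine lintegral_mono fun x => lintegral_mono fun y => ENNReal.ofReal_le_ofReal ?_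
  have := dT_nonneg x y
  rw [← mul_add, ← add_div, ← mul_div_assoc, add_sub_add_comm]
  gcongr
  exact norm_add_sq_le_two_mul _ _

lemma gagliardoSqE_const_smul {E : Type*} [NormedAddCommGroup E] [NormedSpace ℝ E] (σ a : ℝ)
    (f : ℝ → E) :
    gagliardoSqE σ (fun x => a • f x) = ENNReal.ofReal (a ^ 2) * gagliardoSqE σ f := by
  simp only [gagliardoSqE, ← lintegral_lintegral_ofReal_const_mul (sq_nonneg a), ← smul_sub,
    norm_smul_sq, mul_div_assoc]

namespace InHs

variable {n : ℕ} {s : ℝ} {u v : ℝ → En n}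

lemma periodic (hu : InHs s u) : Function.Periodic u 1 := hu.1

lemma contDiff (hu : InHs s u) : ContDiff ℝ 1 u := hu.2.1

lemma gagliardoSqE_deriv_lt_top (hu : InHs s u) : gagliardoSqE (s - 1) (deriv u) < ⊤ := hu.2.2

lemma continuous (hu : InHs s u) : Continuous u := hu.contDiff.continuous

lemma differentiable (hu : InHs s u) : Differentiable ℝ u := hu.contDiff.differentiable one_ne_zero

lemma continuous_deriv (hu : InHs s u) : Continuous (deriv u) := hu.contDiff.continuous_deriv le_rfl

lemma exists_norm_deriv_le (hu : InHs s u) : ∃ S, ∀ x, ‖deriv u x‖ ≤ S :=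
  exists_norm_le_of_periodic_of_continuous (periodic_deriv hu.periodic) hu.continuous_deriv

lemma deriv_add (hu : InHs s u) (hv : InHs s v) :
    deriv (fun x => u x + v x) = fun x => deriv u x + deriv v x :=
  funext fun x => deriv_fun_add (hu.differentiable x) (hv.differentiable x)

lemma deriv_const_smul (a : ℝ) (hu : InHs s u) :
    deriv (fun x => a • u x) = fun x => a • deriv u x :=
  funext fun x => deriv_fun_const_smul a (hu.differentiable x)

lemma add (hu : InHs s u) (hv : InHs s v) : InHs s fun x => u x + v x := by
  refine ⟨hu.periodic.add hv.periodic, hu.contDiff.add hv.contDiff, ?_⟩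
  rw [hu.deriv_add hv]
  refine (gagliardoSqE_add_le _ _ hv.continuous_deriv).trans_lt (ENNReal.add_lt_top.2 ⟨?_, ?_⟩)
  · exact ENNReal.mul_lt_top ENNReal.ofReal_lt_top hu.gagliardoSqE_deriv_lt_top
  · exact ENNReal.mul_lt_top ENNReal.ofReal_lt_top hv.gagliardoSqE_deriv_lt_top

lemma const_smul (a : ℝ) (hu : InHs s u) : InHs s fun x => a • u x := by
  refine ⟨fun x => congrArg (a • ·) (hu.periodic x), ContDiff.const_smul a hu.contDiff, ?_⟩
  rw [hu.deriv_const_smul, gagliardoSqE_const_smul]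
  exact ENNReal.mul_lt_top ENNReal.ofReal_lt_top hu.gagliardoSqE_deriv_lt_top

end InHs

end SobolevSpace

section Metric

/-- The product of the uniform probability measures on two copies of the fundamental domain, that
is, the Lebesgue measure of `𝕋 × 𝕋`. -/
abbrev torusMeasure : Measure (ℝ × ℝ) := (volume.restrict I01).prod (volume.restrict I01)

variable {n : ℕ} {γ u v w : ℝ → En n} {m L S s : ℝ}

lemma norm_sub_le_mul_norm_curve_sub (hγ : IsBilipschitzCurve m L γ)
    (hup : Function.Periodic u 1) (hu : Differentiable ℝ u) (hS : ∀ x, ‖deriv u x‖ ≤ S) (x y : ℝ) :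
    ‖u y - u x‖ ≤ S / m * ‖γ y - γ x‖ := by
  have hm := hγ.pos
  set h := y - x - round (y - x) with hh
  have hshift {f : ℝ → En n} (hf : Function.Periodic f 1) : f y = f (x + h) := by
    rw [← hf.sub_zsmul_eq (round (y - x)) (x := y), zsmul_eq_mul, mul_one, hh]
    congr 1
    ring
  have hS0 : 0 ≤ S := (norm_nonneg _).trans (hS 0)
  rw [hshift hup, hshift hγ.periodic]
  calc ‖u (x + h) - u x‖ ≤ S * |h| := norm_add_sub_le_of_norm_deriv_le hu hS x h
    _ = S / m * (m * |h|) := by field_simp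
    _ ≤ _ := by
        gcongr
        exact hγ.mul_abs_le_norm_sub x h (abs_sub_round (y - x))

lemma norm_Dg_le (hγ : IsBilipschitzCurve m L γ) (hS : ∀ x, ‖deriv u x‖ ≤ S) (x : ℝ) :
    ‖Dg γ u x‖ ≤ S / m := by
  have := hγ.pos
  have hS0 : 0 ≤ S := (norm_nonneg _).trans (hS 0)
  rw [Dg, norm_smul, norm_inv, norm_norm, inv_mul_eq_div]
  gcongr
  exacts [hS x, hγ.le_norm_deriv x]

lemma abs_real_inner_le_of_norm_le {E : Type*} [NormedAddCommGroup E] [InnerProductSpace ℝ E]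
    {a b : E} {A B : ℝ} (ha : ‖a‖ ≤ A) (hb : ‖b‖ ≤ B) : |⟪a, b⟫| ≤ A * B :=
  (abs_real_inner_le_norm a b).trans
    (mul_le_mul ha hb (norm_nonneg _) ((norm_nonneg _).trans ha))

lemma B1E_lt_top (hγ : IsBilipschitzCurve m L γ) (hγs : InHs s γ) (hs : 1 ≤ s) (hu : InHs s u) :
    B1E s γ u < ⊤ := by
  obtain ⟨S, hS⟩ := hu.exists_norm_deriv_le
  refine (B1E_le hγ hu.periodic hu.contDiff hS hs).trans_lt (ENNReal.add_lt_top.2 ⟨?_, ?_⟩)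
  · exact ENNReal.mul_lt_top ENNReal.ofReal_lt_top hu.gagliardoSqE_deriv_lt_top
  · exact ENNReal.mul_lt_top ENNReal.ofReal_lt_top hγs.gagliardoSqE_deriv_lt_top

lemma lintegral_torusMeasure_ropDensity (s : ℝ) (hγ : Continuous γ) (hu : Continuous u) :
    ∫⁻ z, ENNReal.ofReal (ropDensity s γ u z.1 z.2) ∂torusMeasure = B1E s γ u := by
  have hmeas := (measurable_ropDensity s hγ hu).ennreal_ofReal
  rw [lintegral_prod _ hmeas.aemeasurable, B1E]

lemma integrable_ropDensity (hγ : IsBilipschitzCurve m L γ) (hγs : InHs s γ) (hs : 1 ≤ s)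
    (hu : InHs s u) : Integrable (fun z => ropDensity s γ u z.1 z.2) torusMeasure := by
  refine ⟨(measurable_ropDensity s hγ.continuous hu.continuous).aestronglyMeasurable, ?_⟩
  have hnonneg : 0 ≤ fun z : ℝ × ℝ => ropDensity s γ u z.1 z.2 :=
    fun z => ropDensity_nonneg s γ u z.1 z.2
  rw [hasFiniteIntegral_iff_ofReal (ae_of_all _ hnonneg),
    lintegral_torusMeasure_ropDensity s hγ.continuous hu.continuous]
  exact B1E_lt_top hγ hγs hs hu

lemma B1_self_eq_integral_ropDensity (hγ : IsBilipschitzCurve m L γ) (hγs : InHs s γ)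
    (hs : 1 ≤ s) (hu : InHs s u) :
    B1 s γ u u = ∫ z, ropDensity s γ u z.1 z.2 ∂torusMeasure := by
  rw [integral_prod _ (integrable_ropDensity hγ hγs hs hu)]
  simp only [B1, ropDensity, real_inner_self_eq_norm_sq]

lemma B1_self_eq_toReal_B1E (hγ : IsBilipschitzCurve m L γ) (hγs : InHs s γ) (hs : 1 ≤ s)
    (hu : InHs s u) : B1 s γ u u = (B1E s γ u).toReal := by
  have hnonneg : 0 ≤ fun z : ℝ × ℝ => ropDensity s γ u z.1 z.2 :=
    fun z => ropDensity_nonneg s γ u z.1 z.2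
  rw [B1_self_eq_integral_ropDensity hγ hγs hs hu,
    integral_eq_lintegral_of_nonneg_ae (ae_of_all _ hnonneg)
      (integrable_ropDensity hγ hγs hs hu).aestronglyMeasurable,
    lintegral_torusMeasure_ropDensity s hγ.continuous hu.continuous]

lemma integrable_B1 (hγ : IsBilipschitzCurve m L γ) (hγs : InHs s γ) (hs : 1 ≤ s) (hu : InHs s u)
    (hv : InHs s v) :
    Integrable (fun z => ⟪Rop s γ u z.1 z.2, Rop s γ v z.1 z.2⟫ * muW γ z.1 z.2) torusMeasure := by
  have hmeas : Measurable fun z : ℝ × ℝ =>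
      ⟪Rop s γ u z.1 z.2, Rop s γ v z.1 z.2⟫ * muW γ z.1 z.2 :=
    ((measurable_Rop s hγ.continuous hu.continuous).inner
      (measurable_Rop s hγ.continuous hv.continuous)).mul (measurable_muW hγ.continuous)
  refine ((integrable_ropDensity hγ hγs hs hu).add
    (integrable_ropDensity hγ hγs hs hv)).mono' hmeas.aestronglyMeasurable (ae_of_all _ fun z => ?_)
  set a := Rop s γ u z.1 z.2
  set b := Rop s γ v z.1 z.2
  have hab : |⟪a, b⟫| ≤ ‖a‖ ^ 2 + ‖b‖ ^ 2 := by
    nlinarith [abs_real_inner_le_norm a b, two_mul_le_add_sq ‖a‖ ‖b‖, sq_nonneg ‖a‖, sq_nonneg ‖b‖]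
  rw [norm_mul, norm_eq_abs, norm_of_nonneg (muW_nonneg γ z.1 z.2), Pi.add_apply, ropDensity,
    ropDensity, ← add_mul]
  exact mul_le_mul_of_nonneg_right hab (muW_nonneg γ z.1 z.2)

lemma integrable_B2 (hγ : IsBilipschitzCurve m L γ) (hγs : InHs s γ) (hs : 1 ≤ s) (hu : InHs s u)
    (hv : InHs s v) :
    Integrable (fun z : ℝ × ℝ => ‖Rop s γ γ z.1 z.2‖ ^ 2 *
      (⟪u z.2 - u z.1, v z.2 - v z.1⟫ / ‖γ z.2 - γ z.1‖ ^ 2) * muW γ z.1 z.2) torusMeasure := by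
  obtain ⟨S, hS⟩ := hu.exists_norm_deriv_le
  obtain ⟨T, hT⟩ := hv.exists_norm_deriv_le
  have hγc := hγ.continuous
  have huc := hu.continuous
  have hvc := hv.continuous
  have hquot : ∀ z : ℝ × ℝ,
      |⟪u z.2 - u z.1, v z.2 - v z.1⟫ / ‖γ z.2 - γ z.1‖ ^ 2| ≤ S / m * (T / m) := fun z => by
    have hm := hγ.pos
    have hS0 : 0 ≤ S := (norm_nonneg _).trans (hS 0)
    have hT0 : 0 ≤ T := (norm_nonneg _).trans (hT 0)
    rw [abs_div, abs_of_nonneg (sq_nonneg ‖γ z.2 - γ z.1‖)]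
    refine div_le_of_le_mul₀ (sq_nonneg _) (by positivity) ?_
    refine (abs_real_inner_le_of_norm_le
      (norm_sub_le_mul_norm_curve_sub hγ hu.periodic hu.differentiable hS _ _)
      (norm_sub_le_mul_norm_curve_sub hγ hv.periodic hv.differentiable hT _ _)).trans_eq ?_
    ring
  have hmeas : Measurable fun z : ℝ × ℝ =>
      ⟪u z.2 - u z.1, v z.2 - v z.1⟫ / ‖γ z.2 - γ z.1‖ ^ 2 := by fun_prop
  refine ((integrable_ropDensity hγ hγs hs hγs).bdd_mul hmeas.aestronglyMeasurable
    (ae_of_all _ hquot)).congr (ae_of_all _ fun z => ?_)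
  simp only [ropDensity]
  ring

lemma integrable_B3 (hγ : IsBilipschitzCurve m L γ) (hγs : InHs s γ) (hs : 1 ≤ s) (hu : InHs s u)
    (hv : InHs s v) :
    Integrable (fun z : ℝ × ℝ => ‖Rop s γ γ z.1 z.2‖ ^ 2 *
      (⟪Dg γ u z.1, Dg γ v z.1⟫ + ⟪Dg γ u z.2, Dg γ v z.2⟫) * muW γ z.1 z.2) torusMeasure := by
  obtain ⟨S, hS⟩ := hu.exists_norm_deriv_le
  obtain ⟨T, hT⟩ := hv.exists_norm_deriv_le
  have hbound (x : ℝ) : |⟪Dg γ u x, Dg γ v x⟫| ≤ S / m * (T / m) :=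
    abs_real_inner_le_of_norm_le (norm_Dg_le hγ hS x) (norm_Dg_le hγ hT x)
  have hmeas : Measurable fun z : ℝ × ℝ =>
      ⟪Dg γ u z.1, Dg γ v z.1⟫ + ⟪Dg γ u z.2, Dg γ v z.2⟫ := by
    unfold Dg
    fun_prop
  refine ((integrable_ropDensity hγ hγs hs hγs).bdd_mul hmeas.aestronglyMeasurable
    (ae_of_all _ fun z => (norm_add_le _ _).trans (add_le_add (hbound z.1) (hbound z.2)))).congr
    (ae_of_all _ fun z => ?_)
  simp only [ropDensity]
  ring

lemma integrable_innerL2g (hγ : Continuous (deriv γ)) (hu : Continuous u) (hv : Continuous v) :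
    Integrable (fun x => ⟪u x, v x⟫ * ‖deriv γ x‖) (volume.restrict I01) :=
  integrable_I01_of_continuous (by fun_prop)

lemma integrable_innerH1g (hγ : IsBilipschitzCurve m L γ) (hu : Continuous (deriv u))
    (hv : Continuous (deriv v)) :
    Integrable (fun x => ⟪Dg γ u x, Dg γ v x⟫ * ‖deriv γ x‖) (volume.restrict I01) := by
  have hγ' := hγ.continuous_deriv
  have hinv : Continuous fun x => ‖deriv γ x‖⁻¹ :=
    hγ'.norm.inv₀ fun x => (hγ.pos.trans_le (hγ.le_norm_deriv x)).ne'
  refine integrable_I01_of_continuous ?_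
  unfold Dg
  fun_prop

lemma Dg_add (γ : ℝ → En n) (hu : InHs s u) (hv : InHs s v) (x : ℝ) :
    Dg γ (fun x => u x + v x) x = Dg γ u x + Dg γ v x := by
  rw [Dg, hu.deriv_add hv, smul_add, Dg, Dg]

lemma Rop_add (σ : ℝ) (γ : ℝ → En n) (hu : InHs s u) (hv : InHs s v) (x y : ℝ) :
    Rop σ γ (fun x => u x + v x) x y = Rop σ γ u x y + Rop σ γ v x y := by
  simp only [Rop, DDg, hu.deriv_add hv, smul_add, smul_sub]
  abel

lemma Dg_const_smul (γ : ℝ → En n) (a : ℝ) (hu : InHs s u) (x : ℝ) :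
    Dg γ (fun x => a • u x) x = a • Dg γ u x := by
  rw [Dg, hu.deriv_const_smul, smul_comm, Dg]

lemma Rop_const_smul (σ : ℝ) (γ : ℝ → En n) (a : ℝ) (hu : InHs s u) (x y : ℝ) :
    Rop σ γ (fun x => a • u x) x y = a • Rop σ γ u x y := by
  simp only [Rop, DDg, hu.deriv_const_smul, ← smul_sub, smul_comm _ a]

lemma Gmet_comm (s : ℝ) (γ u v : ℝ → En n) : Gmet s γ u v = Gmet s γ v u := by
  simp only [Gmet, B1, B2, B3, innerH1g, innerL2g, real_inner_comm]

lemma Gmet_const_smul_left (γ v : ℝ → En n) (a : ℝ) (hu : InHs s u) :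
    Gmet s γ (fun x => a • u x) v = a * Gmet s γ u v := by
  have h1 : B1 s γ (fun x => a • u x) v = a * B1 s γ u v := by
    simp only [B1, Rop_const_smul _ _ _ hu, real_inner_smul_left, mul_assoc, integral_const_mul]
  have h2 : B2 s γ (fun x => a • u x) v = a * B2 s γ u v := by
    simp only [B2, ← smul_sub, real_inner_smul_left, mul_div_assoc, mul_left_comm _ a, mul_assoc,
      integral_const_mul]
  have h3 : B3 s γ (fun x => a • u x) v = a * B3 s γ u v := by
    simp only [B3, Dg_const_smul _ _ hu, real_inner_smul_left, ← mul_add, mul_left_comm _ a,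
      mul_assoc, integral_const_mul]
  have h4 : innerH1g γ (fun x => a • u x) v = a * innerH1g γ u v := by
    simp only [innerH1g, Dg_const_smul _ _ hu, real_inner_smul_left, mul_assoc, integral_const_mul]
  have h5 : innerL2g γ (fun x => a • u x) v = a * innerL2g γ u v := by
    simp only [innerL2g, real_inner_smul_left, mul_assoc, integral_const_mul]
  simp only [Gmet, h1, h2, h3, h4, h5]
  ring

lemma Gmet_add_left (hγ : IsBilipschitzCurve m L γ) (hγs : InHs s γ) (hs : 1 ≤ s)
    (hu : InHs s u) (hv : InHs s v) (hw : InHs s w) :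
    Gmet s γ (fun x => u x + v x) w = Gmet s γ u w + Gmet s γ v w := by
  have h1 : B1 s γ (fun x => u x + v x) w = B1 s γ u w + B1 s γ v w := by
    simp only [B1, Rop_add _ _ hu hv, inner_add_left, add_mul]
    exact integral_integral_add (integrable_B1 hγ hγs hs hu hw) (integrable_B1 hγ hγs hs hv hw)
  have h2 : B2 s γ (fun x => u x + v x) w = B2 s γ u w + B2 s γ v w := by
    simp only [B2, add_sub_add_comm, inner_add_left, add_div, mul_add, add_mul]
    exact integral_integral_add (integrable_B2 hγ hγs hs hu hw) (integrable_B2 hγ hγs hs hv hw)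
  have h3 : B3 s γ (fun x => u x + v x) w = B3 s γ u w + B3 s γ v w := by
    simp only [B3, Dg_add _ hu hv, inner_add_left, add_add_add_comm]
    simp only [mul_add _ (_ + _) (_ + _), add_mul _ _ (muW _ _ _)]
    exact integral_integral_add (integrable_B3 hγ hγs hs hu hw) (integrable_B3 hγ hγs hs hv hw)
  have h4 : innerH1g γ (fun x => u x + v x) w = innerH1g γ u w + innerH1g γ v w := by
    simp only [innerH1g, Dg_add _ hu hv, inner_add_left, add_mul]
    exact integral_add (integrable_innerH1g hγ hu.continuous_deriv hw.continuous_deriv)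
      (integrable_innerH1g hγ hv.continuous_deriv hw.continuous_deriv)
  have h5 : innerL2g γ (fun x => u x + v x) w = innerL2g γ u w + innerL2g γ v w := by
    simp only [innerL2g, inner_add_left, add_mul]
    exact integral_add (integrable_innerL2g hγ.continuous_deriv hu.continuous hw.continuous)
      (integrable_innerL2g hγ.continuous_deriv hv.continuous hw.continuous)
  simp only [Gmet, h1, h2, h3, h4, h5]
  ring

end Metric

section NormEquivalence

variable {n : ℕ} {γ u : ℝ → En n} {m L S s η : ℝ}

lemma toReal_le_of_le_ofReal_mul_add {x y z : ℝ≥0∞} {a b : ℝ} (ha : 0 ≤ a) (hb : 0 ≤ b)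
    (hy : y < ⊤) (hz : z < ⊤) (h : x ≤ ENNReal.ofReal a * y + ENNReal.ofReal b * z) :
    x.toReal ≤ a * y.toReal + b * z.toReal := by
  have hay : ENNReal.ofReal a * y ≠ ⊤ := ENNReal.mul_ne_top ENNReal.ofReal_ne_top hy.ne
  have hbz : ENNReal.ofReal b * z ≠ ⊤ := ENNReal.mul_ne_top ENNReal.ofReal_ne_top hz.ne
  have := ENNReal.toReal_mono (ENNReal.add_ne_top.2 ⟨hay, hbz⟩) h
  rwa [ENNReal.toReal_add hay hbz, ENNReal.toReal_mul, ENNReal.toReal_mul,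
    ENNReal.toReal_ofReal ha, ENNReal.toReal_ofReal hb] at this

lemma mul_add_mul_add_mul_le_add_mul_add {a b c x y z : ℝ} (ha : 0 ≤ a) (hb : 0 ≤ b) (hc : 0 ≤ c)
    (hx : 0 ≤ x) (hy : 0 ≤ y) (hz : 0 ≤ z) :
    a * x + b * y + c * z ≤ (a + b + c) * (x + y + z) := by
  have : 0 ≤ a * (y + z) + b * (x + z) + c * (x + y) := by positivity
  linarith

lemma exists_norm_deriv_le_and_sq_eq (hs : 3 / 2 < s) (hη : 0 < η) :
    ∃ C, 0 < C ∧ ∀ u : ℝ → En n, InHs s u → ∃ S, (∀ x, ‖deriv u x‖ ≤ S) ∧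
      S ^ 2 = η * (gagliardoSqE (s - 1) (deriv u)).toReal + C * ∫ x in I01, ‖deriv u x‖ ^ 2 := by
  obtain ⟨C, hC, hmorrey⟩ :=
    exists_norm_sq_le_gagliardoSqE_add (E := En n) (σ := s - 1) (by linarith) hη
  refine ⟨C, hC, fun u hu => ⟨√(_), norm_le_of_periodic (periodic_deriv hu.periodic) fun x hx =>
    le_sqrt_of_sq_le (hmorrey _ hu.continuous_deriv hu.gagliardoSqE_deriv_lt_top x hx),
    sq_sqrt ?_⟩⟩
  positivity

lemma B1_self_le (hγ : IsBilipschitzCurve m L γ) (hγs : InHs s γ) (hs : 1 ≤ s) (hu : InHs s u)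
    (hS : ∀ x, ‖deriv u x‖ ≤ S) :
    B1 s γ u u ≤ 2 * L ^ 2 / m ^ (2 * s + 1) * (gagliardoSqE (s - 1) (deriv u)).toReal +
      2 * L ^ 2 / m ^ (2 * s + 1) * (S ^ 2 / m ^ 2) *
        (gagliardoSqE (s - 1) (deriv γ)).toReal := by
  have := hγ.pos
  rw [B1_self_eq_toReal_B1E hγ hγs hs hu]
  exact toReal_le_of_le_ofReal_mul_add (by positivity) (by positivity)
    hu.gagliardoSqE_deriv_lt_top hγs.gagliardoSqE_deriv_lt_top
    (B1E_le hγ hu.periodic hu.contDiff hS hs)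

lemma toReal_gagliardoSqE_deriv_le (hγ : IsBilipschitzCurve m L γ) (hγs : InHs s γ) (hs : 1 ≤ s)
    (hu : InHs s u) (hS : ∀ x, ‖deriv u x‖ ≤ S) :
    (gagliardoSqE (s - 1) (deriv u)).toReal ≤ 8 * (L ^ (2 * s + 1) / m ^ 2) * B1 s γ u u +
      20 * (S ^ 2 / m ^ 2) * (gagliardoSqE (s - 1) (deriv γ)).toReal := by
  have := hγ.pos'
  rw [B1_self_eq_toReal_B1E hγ hγs hs hu]
  exact toReal_le_of_le_ofReal_mul_add (by positivity) (by positivity)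
    (B1E_lt_top hγ hγs hs hu) hγs.gagliardoSqE_deriv_lt_top
    (gagliardoSqE_deriv_le hγ hu.periodic hu.continuous hS hs)

lemma B2_self_le (hγ : IsBilipschitzCurve m L γ) (hγs : InHs s γ) (hs : 1 ≤ s) (hu : InHs s u)
    (hS : ∀ x, ‖deriv u x‖ ≤ S) : B2 s γ u u ≤ (S / m) ^ 2 * B1 s γ γ γ := by
  rw [B1_self_eq_integral_ropDensity hγ hγs hs hγs, ← integral_const_mul, B2,
    integral_integral (integrable_B2 hγ hγs hs hu hu)]
  refine integral_mono (integrable_B2 hγ hγs hs hu hu)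
    ((integrable_ropDensity hγ hγs hs hγs).const_mul _) fun z => ?_
  have hquot : ‖u z.2 - u z.1‖ ^ 2 / ‖γ z.2 - γ z.1‖ ^ 2 ≤ (S / m) ^ 2 := by
    rw [← div_pow]
    have := norm_sub_le_mul_norm_curve_sub hγ hu.periodic hu.differentiable hS z.1 z.2
    have hS0 : 0 ≤ S / m := div_nonneg ((norm_nonneg _).trans (hS 0)) hγ.pos.le
    exact pow_le_pow_left₀ (by positivity) (div_le_of_le_mul₀ (norm_nonneg _) hS0 this) 2
  have := muW_nonneg γ z.1 z.2
  simp only [real_inner_self_eq_norm_sq, ropDensity]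
  calc _ ≤ ‖Rop s γ γ z.1 z.2‖ ^ 2 * (S / m) ^ 2 * muW γ z.1 z.2 := by gcongr
    _ = _ := by ring

lemma B3_self_le (hγ : IsBilipschitzCurve m L γ) (hγs : InHs s γ) (hs : 1 ≤ s) (hu : InHs s u)
    (hS : ∀ x, ‖deriv u x‖ ≤ S) : B3 s γ u u ≤ 2 * (S / m) ^ 2 * B1 s γ γ γ := by
  rw [B1_self_eq_integral_ropDensity hγ hγs hs hγs, ← integral_const_mul, B3,
    integral_integral (integrable_B3 hγ hγs hs hu hu)]
  refine integral_mono (integrable_B3 hγ hγs hs hu hu)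
    ((integrable_ropDensity hγ hγs hs hγs).const_mul _) fun z => ?_
  have := muW_nonneg γ z.1 z.2
  simp only [real_inner_self_eq_norm_sq, ropDensity]
  calc _ ≤ ‖Rop s γ γ z.1 z.2‖ ^ 2 * ((S / m) ^ 2 + (S / m) ^ 2) * muW γ z.1 z.2 := by
        gcongr <;> exact norm_Dg_le hγ hS _
    _ = _ := by ring

lemma B1_self_nonneg (s : ℝ) (γ u : ℝ → En n) : 0 ≤ B1 s γ u u :=
  integral_nonneg fun x => integral_nonneg fun y =>
    mul_nonneg real_inner_self_nonneg (muW_nonneg γ x y)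

lemma B2_self_nonneg (s : ℝ) (γ u : ℝ → En n) : 0 ≤ B2 s γ u u :=
  integral_nonneg fun x => integral_nonneg fun y =>
    mul_nonneg (mul_nonneg (sq_nonneg _) (div_nonneg real_inner_self_nonneg (sq_nonneg _)))
      (muW_nonneg γ x y)

lemma B3_self_nonneg (s : ℝ) (γ u : ℝ → En n) : 0 ≤ B3 s γ u u :=
  integral_nonneg fun x => integral_nonneg fun y =>
    mul_nonneg (mul_nonneg (sq_nonneg _) (add_nonneg real_inner_self_nonneg real_inner_self_nonneg))
      (muW_nonneg γ x y)

lemma innerL2g_self_nonneg (γ u : ℝ → En n) : 0 ≤ innerL2g γ u u :=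
  integral_nonneg fun _ => mul_nonneg real_inner_self_nonneg (norm_nonneg _)

lemma innerH1g_self_nonneg (γ u : ℝ → En n) : 0 ≤ innerH1g γ u u :=
  integral_nonneg fun _ => mul_nonneg real_inner_self_nonneg (norm_nonneg _)

lemma Gmet_self_nonneg (hs : 0 ≤ 2 * s + 1) (γ u : ℝ → En n) : 0 ≤ Gmet s γ u u := by
  have := B1_self_nonneg s γ u
  have := B2_self_nonneg s γ u
  have := B3_self_nonneg s γ u
  have := innerH1g_self_nonneg γ u
  have := innerL2g_self_nonneg γ u
  unfold Gmet
  positivity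

lemma innerL2g_self_le (hγ : IsBilipschitzCurve m L γ) (hu : Continuous u) :
    innerL2g γ u u ≤ L * ∫ x in I01, ‖u x‖ ^ 2 := by
  rw [← integral_const_mul]
  refine integral_mono (integrable_innerL2g hγ.continuous_deriv hu hu)
    (integrable_I01_of_continuous (by fun_prop)) fun x => ?_
  simp only [real_inner_self_eq_norm_sq, mul_comm _ ‖deriv γ x‖]
  gcongr
  exact hγ.norm_deriv_le x

lemma integral_norm_sq_le_innerL2g (hγ : IsBilipschitzCurve m L γ) (hu : Continuous u) :
    ∫ x in I01, ‖u x‖ ^ 2 ≤ m⁻¹ * innerL2g γ u u := by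
  rw [le_inv_mul_iff₀ hγ.pos, ← integral_const_mul]
  refine integral_mono (integrable_I01_of_continuous (by fun_prop))
    (integrable_innerL2g hγ.continuous_deriv hu hu) fun x => ?_
  simp only [real_inner_self_eq_norm_sq, mul_comm _ ‖deriv γ x‖]
  gcongr
  exact hγ.le_norm_deriv x

lemma inner_Dg_self_mul_norm_deriv (γ u : ℝ → En n) (x : ℝ) :
    ⟪Dg γ u x, Dg γ u x⟫ * ‖deriv γ x‖ = ‖deriv γ x‖⁻¹ * ‖deriv u x‖ ^ 2 := by
  rw [real_inner_self_eq_norm_sq, Dg, norm_smul_sq]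
  rcases eq_or_ne ‖deriv γ x‖ 0 with h | h
  · simp [h]
  · field_simp

lemma innerH1g_self_le (hγ : IsBilipschitzCurve m L γ) (hu : Continuous (deriv u)) :
    innerH1g γ u u ≤ m⁻¹ * ∫ x in I01, ‖deriv u x‖ ^ 2 := by
  have := hγ.pos
  rw [← integral_const_mul]
  refine integral_mono (integrable_innerH1g hγ hu hu)
    (integrable_I01_of_continuous (by fun_prop)) fun x => ?_
  simp only [inner_Dg_self_mul_norm_deriv]
  gcongr
  exact hγ.le_norm_deriv x

lemma integral_norm_deriv_sq_le_innerH1g (hγ : IsBilipschitzCurve m L γ)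
    (hu : Continuous (deriv u)) : ∫ x in I01, ‖deriv u x‖ ^ 2 ≤ L * innerH1g γ u u := by
  rw [← inv_mul_le_iff₀ hγ.pos', ← integral_const_mul]
  refine integral_mono (integrable_I01_of_continuous (by fun_prop))
    (integrable_innerH1g hγ hu hu) fun x => ?_
  simp only [inner_Dg_self_mul_norm_deriv]
  gcongr
  exacts [hγ.pos.trans_le (hγ.le_norm_deriv x), hγ.norm_deriv_le x]

lemma exists_Gmet_self_le (hγ : IsBilipschitzCurve m L γ) (hγs : InHs s γ) (hs : 3 / 2 < s) :
    ∃ C, ∀ u : ℝ → En n, InHs s u → Gmet s γ u u ≤ C * HsNormSq s u := by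
  obtain ⟨C₀, hC₀, hmorrey⟩ := exists_norm_deriv_le_and_sq_eq (n := n) hs one_pos
  have hm := hγ.pos
  have hL := hγ.pos'
  have hs1 : 1 ≤ s := by linarith
  have := B1_self_nonneg s γ γ
  set K := 2 * L ^ 2 / m ^ (2 * s + 1)
  set κ := (2 * K * (gagliardoSqE (s - 1) (deriv γ)).toReal + (2 * s + 3) * B1 s γ γ γ) / m ^ 2
  refine ⟨L + (m⁻¹ + κ * C₀) + (2 * K + κ), fun u hu => ?_⟩
  obtain ⟨S, hS, hS_sq⟩ := hmorrey u hu
  have hB2 := mul_le_mul_of_nonneg_left (B2_self_le hγ hγs hs1 hu hS)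
    (by positivity : 0 ≤ 2 * s + 1)
  calc Gmet s γ u u ≤ L * (∫ x in I01, ‖u x‖ ^ 2) + m⁻¹ * (∫ x in I01, ‖deriv u x‖ ^ 2) +
        2 * K * (gagliardoSqE (s - 1) (deriv u)).toReal + κ * S ^ 2 := by
        have hκ : κ * S ^ 2 = 2 * (K * (S ^ 2 / m ^ 2) * (gagliardoSqE (s - 1) (deriv γ)).toReal) +
            (2 * s + 1) * ((S / m) ^ 2 * B1 s γ γ γ) + 2 * (S / m) ^ 2 * B1 s γ γ γ := by ring
        rw [Gmet, hκ]
        linarith [B1_self_le hγ hγs hs1 hu hS, B3_self_le hγ hγs hs1 hu hS,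
          innerH1g_self_le hγ hu.continuous_deriv, innerL2g_self_le hγ hu.continuous]
    _ = L * (∫ x in I01, ‖u x‖ ^ 2) + (m⁻¹ + κ * C₀) * (∫ x in I01, ‖deriv u x‖ ^ 2) +
        (2 * K + κ) * (gagliardoSqE (s - 1) (deriv u)).toReal := by
        rw [hS_sq]
        ring
    _ ≤ _ := mul_add_mul_add_mul_le_add_mul_add (by positivity) (by positivity) (by positivity)
        (by positivity) (by positivity) (by positivity)

/-- The error term in `toReal_gagliardoSqE_deriv_le` is absorbed into the left-hand side by
choosing `η` small in the Morrey inequality. -/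
lemma exists_toReal_gagliardoSqE_deriv_le (hγ : IsBilipschitzCurve m L γ) (hγs : InHs s γ)
    (hs : 3 / 2 < s) : ∃ K C, 0 < K ∧ 0 ≤ C ∧ ∀ u : ℝ → En n, InHs s u →
      (gagliardoSqE (s - 1) (deriv u)).toReal ≤
        K * (2 * B1 s γ u u) + C * ∫ x in I01, ‖deriv u x‖ ^ 2 := by
  have hm := hγ.pos
  have hL := hγ.pos'
  set κ := 20 / m ^ 2 * (gagliardoSqE (s - 1) (deriv γ)).toReal
  have : 0 ≤ κ := by positivity
  obtain ⟨C, hC, hmorrey⟩ := exists_norm_deriv_le_and_sq_eq (n := n) hs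
    (by positivity : 0 < 1 / (2 * (κ + 1)))
  refine ⟨8 * (L ^ (2 * s + 1) / m ^ 2), 2 * (κ * C), by positivity, by positivity,
    fun u hu => ?_⟩
  obtain ⟨S, hS, hS_sq⟩ := hmorrey u hu
  have hbound := toReal_gagliardoSqE_deriv_le hγ hγs (by linarith) hu hS
  set g := (gagliardoSqE (s - 1) (deriv u)).toReal
  have habsorb : κ * (1 / (2 * (κ + 1)) * g) ≤ g / 2 := by
    have : κ * (1 / (2 * (κ + 1))) ≤ 1 / 2 := by
      rw [mul_one_div, div_le_div_iff₀ (by positivity) (by positivity)]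
      linarith
    have := mul_le_mul_of_nonneg_right this (ENNReal.toReal_nonneg : 0 ≤ g)
    linarith
  have herror : 20 * (S ^ 2 / m ^ 2) * (gagliardoSqE (s - 1) (deriv γ)).toReal = κ * S ^ 2 := by
    ring
  rw [herror, hS_sq] at hbound
  linarith

lemma exists_HsNormSq_le_Gmet_self (hγ : IsBilipschitzCurve m L γ) (hγs : InHs s γ)
    (hs : 3 / 2 < s) :
    ∃ D, 0 < D ∧ ∀ u : ℝ → En n, InHs s u → HsNormSq s u ≤ D * Gmet s γ u u := by
  obtain ⟨K, C, hK, hC, hgagliardo⟩ := exists_toReal_gagliardoSqE_deriv_le hγ hγs hs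
  have hm := hγ.pos
  have hL := hγ.pos'
  refine ⟨m⁻¹ + (1 + C) * L + K, by positivity, fun u hu => ?_⟩
  have hB1 := B1_self_nonneg s γ u
  have hB2 : 0 ≤ (2 * s + 1) * B2 s γ u u := mul_nonneg (by linarith) (B2_self_nonneg s γ u)
  calc HsNormSq s u ≤ (∫ x in I01, ‖u x‖ ^ 2) + (1 + C) * (∫ x in I01, ‖deriv u x‖ ^ 2) +
        K * (2 * B1 s γ u u) := by
        rw [HsNormSq]
        linarith [hgagliardo u hu]
    _ ≤ m⁻¹ * innerL2g γ u u + (1 + C) * L * innerH1g γ u u + K * (2 * B1 s γ u u) := by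
        rw [mul_assoc (1 + C)]
        gcongr
        · exact integral_norm_sq_le_innerL2g hγ hu.continuous
        · exact integral_norm_deriv_sq_le_innerH1g hγ hu.continuous_deriv
    _ ≤ (m⁻¹ + (1 + C) * L + K) * (innerL2g γ u u + innerH1g γ u u + 2 * B1 s γ u u) :=
        mul_add_mul_add_mul_le_add_mul_add (by positivity) (by positivity) hK.le
          (innerL2g_self_nonneg γ u) (innerH1g_self_nonneg γ u) (by positivity)
    _ ≤ _ := by
        gcongr
        rw [Gmet]
        linarith [B3_self_nonneg s γ u]

lemma HsNormSq_nonneg (s : ℝ) (u : ℝ → En n) : 0 ≤ HsNormSq s u := by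
  unfold HsNormSq
  positivity

lemma exists_norm_equivalence (hγ : IsBilipschitzCurve m L γ) (hγs : InHs s γ) (hs : 3 / 2 < s) :
    ∃ c C : ℝ, 0 < c ∧ c ≤ C ∧ ∀ u : ℝ → En n, InHs s u →
      c * HsNormSq s u ≤ Gmet s γ u u ∧ Gmet s γ u u ≤ C * HsNormSq s u := by
  obtain ⟨C, hupper⟩ := exists_Gmet_self_le hγ hγs hs
  obtain ⟨D, hD, hlower⟩ := exists_HsNormSq_le_Gmet_self hγ hγs hs
  refine ⟨D⁻¹, max D⁻¹ C, inv_pos.2 hD, le_max_left _ _, fun u hu => ⟨?_, ?_⟩⟩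
  · exact (inv_mul_le_iff₀ hD).2 (hlower u hu)
  · exact (hupper u hu).trans
      (mul_le_mul_of_nonneg_right (le_max_right _ _) (HsNormSq_nonneg s u))

end NormEquivalence

section Fatou

variable {E : Type*} [NormedAddCommGroup E]

lemma gagliardoSqE_eq_lintegral_torusMeasure (σ : ℝ) {f : ℝ → E} (hf : Continuous f) :
    gagliardoSqE σ f = ∫⁻ z, gagliardoKernel σ f z ∂torusMeasure :=
  (lintegral_prod _ (measurable_gagliardoKernel σ hf).aemeasurable).symm

lemma gagliardoSqE_le_of_tendsto {ι : Type*} {l : Filter ι} [l.NeBot] [l.IsCountablyGenerated]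
    {σ : ℝ} {f : ι → ℝ → E} {g : ℝ → E} {c : ℝ≥0∞} (hf : ∀ i, Continuous (f i)) (hg : Continuous g)
    (hfg : ∀ x, Tendsto (fun i => f i x) l (𝓝 (g x)))
    (hc : ∀ᶠ i in l, gagliardoSqE σ (f i) ≤ c) : gagliardoSqE σ g ≤ c := by
  have hlim (z : ℝ × ℝ) :
      Tendsto (fun i => gagliardoKernel σ (f i) z) l (𝓝 (gagliardoKernel σ g z)) :=
    (ENNReal.continuous_ofReal.tendsto _).comp
      ((((hfg z.2).sub (hfg z.1)).norm.pow 2).div_const _)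
  calc gagliardoSqE σ g = ∫⁻ z, liminf (fun i => gagliardoKernel σ (f i) z) l ∂torusMeasure := by
        simp only [gagliardoSqE_eq_lintegral_torusMeasure σ hg, fun z => (hlim z).liminf_eq]
    _ ≤ liminf (fun i => ∫⁻ z, gagliardoKernel σ (f i) z ∂torusMeasure) l :=
        lintegral_liminf_le fun i => measurable_gagliardoKernel σ (hf i)
    _ ≤ c := by
        simp only [← gagliardoSqE_eq_lintegral_torusMeasure σ (hf _)]
        exact liminf_le_of_frequently_le' hc.frequently

lemma tendsto_gagliardoSqE_sub_of_cauchy {σ : ℝ} {f : ℕ → ℝ → E} {g : ℝ → E}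
    (hf : ∀ k, Continuous (f k)) (hg : Continuous g)
    (hfg : ∀ x, Tendsto (fun k => f k x) atTop (𝓝 (g x)))
    (h : Tendsto (fun p : ℕ × ℕ => gagliardoSqE σ fun x => f p.1 x - f p.2 x) atTop (𝓝 0)) :
    Tendsto (fun k => gagliardoSqE σ fun x => f k x - g x) atTop (𝓝 0) := by
  rw [← prod_atTop_atTop_eq] at h
  refine ENNReal.tendsto_nhds_zero.2 fun ε hε => ?_
  filter_upwards [(ENNReal.tendsto_nhds_zero.1 h ε hε).curry] with k hk
  exact gagliardoSqE_le_of_tendsto (fun l => (hf k).sub (hf l)) ((hf k).sub hg)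
    (fun x => tendsto_const_nhds.sub (hfg x)) hk

end Fatou

section UniformLimits

variable {E : Type*} [NormedAddCommGroup E] {f : ℕ → ℝ → E} {g : ℝ → E}

lemma exists_tendstoUniformly_of_norm_sub_sq_le {α : Type*} [CompleteSpace E] {f : ℕ → α → E}
    {r : ℕ × ℕ → ℝ} (hr : Tendsto r atTop (𝓝 0))
    (hf : ∀ k l x, ‖f k x - f l x‖ ^ 2 ≤ r (k, l)) : ∃ g, TendstoUniformly f g atTop := by
  have hcauchy : UniformCauchySeqOn f atTop univ := by
    intro U hU
    obtain ⟨ε, hε, hεU⟩ := Metric.mem_uniformity_dist.1 hU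
    rw [prod_atTop_atTop_eq]
    filter_upwards [hr.eventually_lt_const (pow_pos hε 2)] with p hp x _
    refine hεU ?_
    rw [dist_eq_norm]
    exact lt_of_pow_lt_pow_left₀ 2 hε.le ((hf p.1 p.2 x).trans_lt hp)
  choose g hg using fun x => cauchySeq_tendsto_of_complete (hcauchy.cauchySeq (mem_univ x))
  exact ⟨g, tendstoUniformlyOn_univ.1 (hcauchy.tendstoUniformlyOn_of_tendsto fun x _ => hg x)⟩

lemma tendsto_integral_norm_sub_sq (hf : ∀ k, Continuous (f k)) (hfg : TendstoUniformly f g atTop) :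
    Tendsto (fun k => ∫ x in I01, ‖f k x - g x‖ ^ 2) atTop (𝓝 0) := by
  have hg : Continuous g := hfg.continuous (Frequently.of_forall hf)
  have hlim (x : ℝ) : Tendsto (fun k => ‖f k x - g x‖ ^ 2) atTop (𝓝 0) := by
    simpa using ((hfg.tendsto_at x).sub_const (g x)).norm.pow 2
  rw [← integral_zero ℝ (ℝ) (μ := volume.restrict I01)]
  refine tendsto_integral_filter_of_norm_le_const
    (Eventually.of_forall fun k => Continuous.aestronglyMeasurable ?_) ⟨1, ?_⟩
    (ae_of_all _ hlim)
  · have := hf k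
    fun_prop
  · filter_upwards [Metric.tendstoUniformly_iff.1 hfg 1 one_pos] with k hk
    refine ae_of_all _ fun x => ?_
    rw [norm_pow, norm_norm, ← dist_eq_norm, dist_comm]
    exact pow_le_one₀ dist_nonneg (hk x).le

lemma deriv_eq_and_contDiff_of_tendstoUniformly [NormedSpace ℝ E] {f' : ℝ → E}
    (hf : ∀ k, ContDiff ℝ 1 (f k)) (hfg : TendstoUniformly f g atTop)
    (hfg' : TendstoUniformly (fun k => deriv (f k)) f' atTop) :
    deriv g = f' ∧ ContDiff ℝ 1 g := by
  have hderiv : ∀ x, HasDerivAt g (f' x) x :=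
    hasDerivAt_of_tendstoUniformly hfg'
      (Eventually.of_forall fun k x => ((hf k).differentiable one_ne_zero x).hasDerivAt)
      hfg.tendsto_at
  have hg' : deriv g = f' := funext fun x => (hderiv x).deriv
  have hcont : Continuous f' :=
    hfg'.continuous (Frequently.of_forall fun k => (hf k).continuous_deriv le_rfl)
  exact ⟨hg', contDiff_one_iff_deriv.2 ⟨fun x => (hderiv x).differentiableAt, hg' ▸ hcont⟩⟩

end UniformLimits

section Completeness

variable {n : ℕ} {s : ℝ} {u v : ℝ → En n}

lemma norm_sq_le_integral_norm_sq_add {E : Type*} [NormedAddCommGroup E] [NormedSpace ℝ E]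
    {u : ℝ → E} {S : ℝ} (hup : Function.Periodic u 1) (hu : Differentiable ℝ u)
    (hS : ∀ x, ‖deriv u x‖ ≤ S) (x : ℝ) :
    ‖u x‖ ^ 2 ≤ 2 * (∫ y in I01, ‖u y‖ ^ 2) + 2 * S ^ 2 := by
  have hS0 : 0 ≤ S := (norm_nonneg _).trans (hS 0)
  have hcont := hu.continuous
  have hpoint {x y : ℝ} (hx : x ∈ I01) (hy : y ∈ I01) :
      ‖u x‖ ^ 2 ≤ 2 * ‖u y‖ ^ 2 + 2 * S ^ 2 := by
    have hxy : |x - y| ≤ 1 := abs_le.2 ⟨by linarith [hx.1, hy.2], by linarith [hx.2, hy.1]⟩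
    have hosc := norm_add_sub_le_of_norm_deriv_le hu hS y (x - y)
    rw [add_sub_cancel] at hosc
    have hosc_sq : ‖u x - u y‖ ^ 2 ≤ S ^ 2 :=
      pow_le_pow_left₀ (norm_nonneg _) (hosc.trans (mul_le_of_le_one_right hS0 hxy)) 2
    have hsplit := norm_add_sq_le_two_mul (u y) (u x - u y)
    rw [add_sub_cancel] at hsplit
    linarith
  have hdomain {x : ℝ} (hx : x ∈ I01) : ‖u x‖ ≤ √(2 * (∫ y in I01, ‖u y‖ ^ 2) + 2 * S ^ 2) := by
    refine le_sqrt_of_sq_le ?_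
    calc ‖u x‖ ^ 2 = ∫ _ in I01, ‖u x‖ ^ 2 := by simp
      _ ≤ ∫ y in I01, (2 * ‖u y‖ ^ 2 + 2 * S ^ 2) :=
        setIntegral_mono_on (integrable_const _) (integrable_I01_of_continuous (by fun_prop))
          measurableSet_I01 fun y hy => hpoint hx hy
      _ = _ := by
        rw [integral_add (integrable_I01_of_continuous (by fun_prop)) (integrable_const _),
          integral_const_mul]
        simp
  exact (le_sqrt (norm_nonneg _) (by positivity)).1
    (norm_le_of_periodic hup (fun x hx => hdomain hx) x)

lemma exists_norm_sq_le_mul_HsNormSq (hs : 3 / 2 < s) :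
    ∃ K, 0 < K ∧ ∀ u : ℝ → En n, InHs s u → ∀ x,
      ‖u x‖ ^ 2 ≤ K * HsNormSq s u ∧ ‖deriv u x‖ ^ 2 ≤ K * HsNormSq s u := by
  obtain ⟨C, hC, hmorrey⟩ := exists_norm_deriv_le_and_sq_eq (n := n) hs one_pos
  refine ⟨2 + 2 * (1 + C), by positivity, fun u hu x => ?_⟩
  obtain ⟨S, hS, hS_sq⟩ := hmorrey u hu
  have hS_le : S ^ 2 ≤ (1 + C) * HsNormSq s u := by
    have := mul_add_mul_add_mul_le_add_mul_add le_rfl hC.le zero_le_one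
      (by positivity : 0 ≤ ∫ x in I01, ‖u x‖ ^ 2) (by positivity : 0 ≤ ∫ x in I01, ‖deriv u x‖ ^ 2)
      (ENNReal.toReal_nonneg : 0 ≤ (gagliardoSqE (s - 1) (deriv u)).toReal)
    rw [hS_sq, HsNormSq]
    linarith
  have hL2_le : ∫ x in I01, ‖u x‖ ^ 2 ≤ HsNormSq s u := by
    rw [HsNormSq, add_assoc]
    exact le_add_of_nonneg_right (by positivity)
  have hderiv := pow_le_pow_left₀ (norm_nonneg _) (hS x) 2
  have hu_sq := norm_sq_le_integral_norm_sq_add hu.periodic hu.differentiable hS x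
  have : 0 ≤ (1 + C) * HsNormSq s u := (sq_nonneg S).trans hS_le
  have := HsNormSq_nonneg s u
  constructor <;> linarith

lemma eq_zero_of_HsNormSq_nonpos (hs : 3 / 2 < s) (hu : InHs s u) (h : HsNormSq s u ≤ 0) :
    u = 0 := by
  obtain ⟨K, hK, hsup⟩ := exists_norm_sq_le_mul_HsNormSq (n := n) hs
  ext1 x
  have : ‖u x‖ ^ 2 ≤ 0 := (hsup u hu x).1.trans (mul_nonpos_of_nonneg_of_nonpos hK.le h)
  simpa using this.antisymm (sq_nonneg _)

namespace InHs

lemma sub (hu : InHs s u) (hv : InHs s v) : InHs s fun x => u x - v x := by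
  simpa [sub_eq_add_neg] using hu.add (hv.const_smul (-1))

lemma deriv_sub (hu : InHs s u) (hv : InHs s v) :
    deriv (fun x => u x - v x) = fun x => deriv u x - deriv v x :=
  funext fun x => deriv_fun_sub (hu.differentiable x) (hv.differentiable x)

end InHs

lemma tendsto_gagliardoSqE_deriv_sub {U : ℕ → ℝ → En n} (hU : ∀ k, InHs s (U k))
    (h : Tendsto (fun p : ℕ × ℕ => HsNormSq s fun x => U p.1 x - U p.2 x) atTop (𝓝 0)) :
    Tendsto (fun p : ℕ × ℕ => gagliardoSqE (s - 1) fun x => deriv (U p.1) x - deriv (U p.2) x)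
      atTop (𝓝 0) := by
  have hfin (p : ℕ × ℕ) :
      gagliardoSqE (s - 1) (fun x => deriv (U p.1) x - deriv (U p.2) x) ≠ ⊤ := by
    rw [← (hU p.1).deriv_sub (hU p.2)]
    exact ((hU p.1).sub (hU p.2)).gagliardoSqE_deriv_lt_top.ne
  refine (ENNReal.tendsto_toReal_zero_iff hfin).1
    (squeeze_zero (fun _ => ENNReal.toReal_nonneg) (fun p => ?_) h)
  rw [← (hU p.1).deriv_sub (hU p.2), HsNormSq]
  exact le_add_of_nonneg_left (by positivity)

lemma exists_tendstoUniformly_of_HsNormSq (hs : 3 / 2 < s) {U : ℕ → ℝ → En n}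
    (hU : ∀ k, InHs s (U k))
    (h : Tendsto (fun p : ℕ × ℕ => HsNormSq s fun x => U p.1 x - U p.2 x) atTop (𝓝 0)) :
    ∃ w, TendstoUniformly U w atTop ∧ TendstoUniformly (fun k => deriv (U k)) (deriv w) atTop ∧
      ContDiff ℝ 1 w := by
  obtain ⟨K, _, hsup⟩ := exists_norm_sq_le_mul_HsNormSq (n := n) hs
  have hr := h.const_mul K
  rw [mul_zero] at hr
  have hbound (k l : ℕ) (x : ℝ) := hsup _ ((hU k).sub (hU l)) x
  simp only [(hU _).deriv_sub (hU _)] at hbound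
  obtain ⟨w, hw⟩ := exists_tendstoUniformly_of_norm_sub_sq_le hr fun k l x => (hbound k l x).1
  obtain ⟨w', hw'⟩ := exists_tendstoUniformly_of_norm_sub_sq_le hr fun k l x => (hbound k l x).2
  obtain ⟨rfl, hwC⟩ := deriv_eq_and_contDiff_of_tendstoUniformly (fun k => (hU k).contDiff) hw hw'
  exact ⟨w, hw, hw', hwC⟩

lemma inHs_of_gagliardoSqE_deriv_sub_lt_top (hu : InHs s u) (hvp : Function.Periodic v 1)
    (hv : ContDiff ℝ 1 v)
    (h : gagliardoSqE (s - 1) (fun x => deriv u x - deriv v x) < ⊤) : InHs s v := by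
  have := hv.continuous_deriv le_rfl
  have := hu.continuous_deriv
  refine ⟨hvp, hv, ?_⟩
  have hle := gagliardoSqE_add_le (s - 1) (deriv u)
    (g := fun x => (-1 : ℝ) • (deriv u x - deriv v x)) (by fun_prop)
  rw [gagliardoSqE_const_smul] at hle
  simp only [neg_smul, one_smul, neg_sub, add_sub_cancel] at hle
  refine hle.trans_lt (ENNReal.add_lt_top.2
    ⟨ENNReal.mul_lt_top ENNReal.ofReal_lt_top hu.gagliardoSqE_deriv_lt_top, ?_⟩)
  exact ENNReal.mul_lt_top ENNReal.ofReal_lt_top (ENNReal.mul_lt_top ENNReal.ofReal_lt_top h)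

lemma exists_tendsto_HsNormSq_of_cauchy (hs : 3 / 2 < s) {U : ℕ → ℝ → En n}
    (hU : ∀ k, InHs s (U k))
    (h : Tendsto (fun p : ℕ × ℕ => HsNormSq s fun x => U p.1 x - U p.2 x) atTop (𝓝 0)) :
    ∃ w, InHs s w ∧ Tendsto (fun k => HsNormSq s fun x => U k x - w x) atTop (𝓝 0) := by
  obtain ⟨w, hw, hw', hwC⟩ := exists_tendstoUniformly_of_HsNormSq hs hU h
  have hU' (k : ℕ) : Continuous (deriv (U k)) := (hU k).continuous_deriv
  have hgagliardo := tendsto_gagliardoSqE_sub_of_cauchy hU' (hwC.continuous_deriv le_rfl)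
    hw'.tendsto_at (tendsto_gagliardoSqE_deriv_sub hU h)
  have hper : Function.Periodic w 1 := fun x => tendsto_nhds_unique (hw.tendsto_at (x + 1)) <| by
    simpa only [(hU _).periodic x] using hw.tendsto_at x
  obtain ⟨k, hk⟩ := (hgagliardo.eventually_lt_const ENNReal.zero_lt_top).exists
  have hwHs := inHs_of_gagliardoSqE_deriv_sub_lt_top (hU k) hper hwC hk
  refine ⟨w, hwHs, ?_⟩
  have hsum := ((tendsto_integral_norm_sub_sq (fun k => (hU k).continuous) hw).add
    (tendsto_integral_norm_sub_sq hU' hw')).add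
    ((ENNReal.tendsto_toReal ENNReal.zero_ne_top).comp hgagliardo)
  simpa [HsNormSq, (hU _).deriv_sub hwHs, Function.comp_def] using hsum

end Completeness

section Riesz

lemma existsUnique_forall_eq_inner_of_complete {V : Type*} [AddCommGroup V] [Module ℝ V]
    (c : InnerProductSpace.Core ℝ V)
    (hc : ∀ u : ℕ → V,
      Tendsto (fun p : ℕ × ℕ => c.inner (u p.1 - u p.2) (u p.1 - u p.2)) atTop (𝓝 0) →
      ∃ w, Tendsto (fun k => c.inner (u k - w) (u k - w)) atTop (𝓝 0))
    (ℓ : V →ₗ[ℝ] ℝ) {M : ℝ} (hℓ : ∀ v, |ℓ v| ≤ M * √(c.inner v v)) :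
    ∃! w, ∀ v, ℓ v = c.inner w v := by
  let _ : NormedAddCommGroup V := c.toNormedAddCommGroup
  let _ : InnerProductSpace ℝ V := InnerProductSpace.ofCore c.toCore
  have hnorm_sq (v : V) : c.inner v v = ‖v‖ ^ 2 := real_inner_self_eq_norm_sq v
  simp only [hnorm_sq] at hc hℓ
  have : CompleteSpace V := by
    refine Metric.complete_of_cauchySeq_tendsto fun u hu => ?_
    rw [cauchySeq_iff_tendsto_dist_atTop_0] at hu
    obtain ⟨w, hw⟩ := hc u (by simpa [dist_eq_norm] using hu.pow 2)
    exact ⟨w, tendsto_iff_norm_sub_tendsto_zero.2 (by simpa using hw.sqrt)⟩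
  simp only [sqrt_sq (norm_nonneg _)] at hℓ
  refine ⟨(InnerProductSpace.toDual ℝ V).symm (ℓ.mkContinuous M hℓ), fun v => ?_, fun w hw => ?_⟩
  · exact (InnerProductSpace.toDual_symm_apply (x := v) (y := ℓ.mkContinuous M hℓ)).symm
  · refine ext_inner_right ℝ fun v => ?_
    rw [InnerProductSpace.toDual_symm_apply]
    exact (hw v).symm

/-- The Sobolev–Slobodeckij space `H^s(𝕋, ℝⁿ)` as a space of `C¹` periodic functions. -/
def sobolevSpace (s : ℝ) (n : ℕ) : Submodule ℝ (ℝ → En n) where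
  carrier := {u | InHs s u}
  add_mem' := InHs.add
  zero_mem' := ⟨fun _ => rfl, contDiff_const, by simp [gagliardoSqE]⟩
  smul_mem' := fun a _ => InHs.const_smul a

variable {n : ℕ} {γ : ℝ → En n} {m L s : ℝ}

/-- The metric `G_γ` as an inner product on `H^s(𝕋, ℝⁿ)`. -/
abbrev metricCore (hγ : IsBilipschitzCurve m L γ) (hγs : InHs s γ) (hs : 3 / 2 < s) :
    InnerProductSpace.Core ℝ (sobolevSpace s n) where
  inner u v := Gmet s γ u v
  conj_inner_symm u v := Gmet_comm s γ v u
  re_inner_nonneg u := Gmet_self_nonneg (by linarith) γ u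
  add_left u v w := Gmet_add_left hγ hγs (by linarith) u.2 v.2 w.2
  smul_left u v a := Gmet_const_smul_left γ v a u.2
  definite u hu := by
    obtain ⟨D, _, hlower⟩ := exists_HsNormSq_le_Gmet_self hγ hγs hs
    refine Subtype.ext (eq_zero_of_HsNormSq_nonpos hs u.2 ((hlower u u.2).trans_eq ?_))
    rw [show Gmet s γ u u = 0 from hu, mul_zero]

lemma exists_tendsto_Gmet_of_cauchy (hγ : IsBilipschitzCurve m L γ) (hγs : InHs s γ)
    (hs : 3 / 2 < s) {U : ℕ → ℝ → En n} (hU : ∀ k, InHs s (U k))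
    (h : Tendsto (fun p : ℕ × ℕ => Gmet s γ (U p.1 - U p.2) (U p.1 - U p.2)) atTop (𝓝 0)) :
    ∃ w, InHs s w ∧ Tendsto (fun k => Gmet s γ (U k - w) (U k - w)) atTop (𝓝 0) := by
  obtain ⟨c, C, hc, _, hequiv⟩ := exists_norm_equivalence hγ hγs hs
  obtain ⟨w, hw, hlim⟩ := exists_tendsto_HsNormSq_of_cauchy hs hU <|
    squeeze_zero (fun p => HsNormSq_nonneg s _)
      (fun p => (le_inv_mul_iff₀ hc).2 (hequiv _ ((hU p.1).sub (hU p.2))).1)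
      (by simpa using! h.const_mul c⁻¹)
  exact ⟨w, hw, squeeze_zero (fun k => Gmet_self_nonneg (by linarith) γ _)
    (fun k => (hequiv _ ((hU k).sub hw)).2) (by simpa using hlim.const_mul C)⟩

lemma existsUnique_forall_eq_Gmet (hγ : IsBilipschitzCurve m L γ) (hγs : InHs s γ) (hs : 3 / 2 < s)
    (ℓ : sobolevSpace s n →ₗ[ℝ] ℝ) {M : ℝ} (hℓ : ∀ v, |ℓ v| ≤ M * HsNorm s v.1) :
    ∃! w : sobolevSpace s n, ∀ v, ℓ v = Gmet s γ w v := by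
  obtain ⟨D, hD, hlower⟩ := exists_HsNormSq_le_Gmet_self hγ hγs hs
  refine existsUnique_forall_eq_inner_of_complete (metricCore hγ hγs hs) (fun U hU => ?_) ℓ
    (M := |M| * √D) fun v => ?_
  · obtain ⟨w, hw, hlim⟩ := exists_tendsto_Gmet_of_cauchy hγ hγs hs (fun k => (U k).2) hU
    exact ⟨⟨w, hw⟩, hlim⟩
  · calc |ℓ v| ≤ M * HsNorm s v.1 := hℓ v
      _ ≤ |M| * √(D * Gmet s γ v v) :=
        mul_le_mul (le_abs_self M) (sqrt_le_sqrt (hlower v v.2)) (sqrt_nonneg _) (abs_nonneg M)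
      _ = |M| * √D * √(Gmet s γ v v) := by rw [sqrt_mul hD.le, mul_assoc]

end Riesz

/-- `G` is a strong Riemannian metric: for every `γ ∈ 𝓜`, `G_γ` is a
symmetric bilinear form on `H^s(𝕋,ℝⁿ)` and there are `0 < c ≤ C < ∞` with
`c‖u‖²_{H^s} ≤ G_γ(u,u) ≤ C‖u‖²_{H^s}` for all `u ∈ H^s(𝕋,ℝⁿ)`; consequently the
Riesz map `J_γ u = G_γ(u, ·)` is an isomorphism onto the continuous dual
(every bounded linear functional on `H^s` is uniquely represented by `G_γ`). -/
theorem statement7 (s : ℝ) (hs : s ∈ Set.Ioo (3 / 2 : ℝ) 2) (n : ℕ) (hn : 2 ≤ n)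
    (γ : ℝ → En n) (hγ : InM s γ) :
    (∀ u v : ℝ → En n, InHs s u → InHs s v → Gmet s γ u v = Gmet s γ v u) ∧
    (∀ u v w : ℝ → En n, InHs s u → InHs s v → InHs s w →
      Gmet s γ (fun x => u x + v x) w = Gmet s γ u w + Gmet s γ v w) ∧
    (∀ (a : ℝ) (u v : ℝ → En n), InHs s u → InHs s v →
      Gmet s γ (fun x => a • u x) v = a * Gmet s γ u v) ∧
    (∃ c C : ℝ, 0 < c ∧ c ≤ C ∧ ∀ u : ℝ → En n, InHs s u →
      c * HsNormSq s u ≤ Gmet s γ u u ∧ Gmet s γ u u ≤ C * HsNormSq s u) ∧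
    (∀ ℓ : (ℝ → En n) → ℝ,
      (∀ u v : ℝ → En n, InHs s u → InHs s v → ℓ (fun x => u x + v x) = ℓ u + ℓ v) →
      (∀ (a : ℝ) (u : ℝ → En n), InHs s u → ℓ (fun x => a • u x) = a * ℓ u) →
      (∃ M : ℝ, ∀ u : ℝ → En n, InHs s u → |ℓ u| ≤ M * HsNorm s u) →
      ∃! w : ℝ → En n, InHs s w ∧ ∀ v : ℝ → En n, InHs s v → ℓ v = Gmet s γ w v) := by
  obtain ⟨m, L, hbilip⟩ := exists_isBilipschitzCurve hγ.1.periodic hγ.1.contDiff hγ.2.1 hγ.2.2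
  have hs1 : 1 ≤ s := by linarith [hs.1]
  refine ⟨fun u v _ _ => Gmet_comm s γ u v,
    fun u v w hu hv hw => Gmet_add_left hbilip hγ.1 hs1 hu hv hw,
    fun a u v hu _ => Gmet_const_smul_left γ v a hu,
    exists_norm_equivalence hbilip hγ.1 hs.1, fun ℓ hadd hsmul ⟨M, hM⟩ => ?_⟩
  let ℓ' : sobolevSpace s n →ₗ[ℝ] ℝ :=
    { toFun := fun u => ℓ u
      map_add' := fun u v => hadd u v u.2 v.2
      map_smul' := fun a u => hsmul a u u.2 }
  obtain ⟨w, hw, huniq⟩ :=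
    existsUnique_forall_eq_Gmet hbilip hγ.1 hs.1 ℓ' fun v => hM v v.2
  exact ⟨w, ⟨w.2, fun v hv => hw ⟨v, hv⟩⟩,
    fun w' hw' => congrArg Subtype.val (huniq ⟨w', hw'.1⟩ fun v => hw'.2 v v.2)⟩
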